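/- arXiv:2506.17071 — 3 statements merged into one kernel-verified Lean document; each statement's English description precedes it below -/
import Mathlib

section
/- Let k be a field and let f : X → Y be a morphism over k between separated k-schemes of finite type. Assume: (i) X is equidimensional, i.e. every irreducible component of X has dimension equal to dim X; (ii) Y is irreducible; (iii) Y is smooth over k; (iv) for every closed point y of Y, the scheme-theoretic fiber X_y = X ×_Y Spec κ(y) is smooth over the residue field κ(y) and of pure dimension dim X − dim Y. Then X is smooth over k and f is a smooth morphism. -/
open AlgebraicGeometry CategoryTheory Limits

universe u

/-!
Let `d` be the dimension of `Y` near `f x` and choose functions `a₁, …, aᵣ` on `X` whose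
differentials form a basis of the cotangent space at `x` of the fibre of `f` through `x`, so that
`r` is the dimension of this fibre at `x`. Then `(f, a₁, …, aᵣ) : X → 𝔸ʳ_Y` is unramified at `x`,
and `𝔸ʳ_Y` is étale over `𝔸ᵈ⁺ʳ_k` because `Y` is locally étale over `𝔸ᵈ_k`. So `X → 𝔸ᵈ⁺ʳ_k` is
unramified at `x`, and near `x` it factors as a closed immersion into a scheme `Z` étale over
`𝔸ᵈ⁺ʳ_k`. The local rings of `Z` are domains, since `𝔸ᵈ⁺ʳ_k` is normal, and `dim Z ≤ d + r`. Every
component of `X` has dimension at least `d + r`, so the closed immersion is an isomorphism near `x`;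
hence `X` is étale at `x` over `𝔸ᵈ⁺ʳ_k`, thus also over `𝔸ʳ_Y`, and `f` is smooth at `x`.
The smooth locus of `f` is open and every nonempty closed subset of `X` has a closed point, so it
suffices to treat closed points `x`.
-/

section KrullDimension

open Algebra

theorem ringKrullDim_le_of_quasiFinite (R S : Type*) [CommRing R] [CommRing S] [Algebra R S]
    [QuasiFinite R S] : ringKrullDim S ≤ ringKrullDim R := by
  refine Order.krullDim_le_of_strictMono (PrimeSpectrum.comap (algebraMap R S)) fun P Q h => ?_
  refine lt_of_le_of_ne (Ideal.comap_mono h.le) fun e => h.ne (PrimeSpectrum.ext ?_)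
  exact QuasiFinite.eq_of_le_of_under_eq (R := R) P.asIdeal Q.asIdeal h.le
    (congrArg PrimeSpectrum.asIdeal e)

theorem ringKrullDim_eq_of_isIntegral (R S : Type*) [CommRing R] [CommRing S] [Algebra R S]
    [FaithfulSMul R S] [Algebra.IsIntegral R S] : ringKrullDim S = ringKrullDim R := by
  apply le_antisymm
  · refine Order.krullDim_le_of_strictMono (PrimeSpectrum.comap (algebraMap R S)) fun P Q h => ?_
    exact Ideal.comap_lt_comap_of_integral_mem_sdiff h.le
      (Set.exists_of_ssubset h).choose_spec (Algebra.IsIntegral.isIntegral _)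
  · refine iSup_le fun l => ?_
    obtain ⟨⟨Q, _, hQ⟩⟩ := Ideal.nonempty_primesOver (S := S) l.head.asIdeal
    obtain ⟨L, hL, -⟩ := Ideal.exists_ltSeries_of_hasGoingUp l Q
    rw [← hL]
    exact le_iSup (fun L : LTSeries (PrimeSpectrum S) => ((L.length : ℕ∞) : WithBot ℕ∞)) L

theorem ringKrullDim_eq_trdeg_of_isAlgebraic (k A L : Type*) [Field k] [CommRing A] [CommRing L]
    [IsDomain L] [Algebra k A] [FiniteType k A] [Algebra k L] [Algebra A L] [IsScalarTower k A L]
    [FaithfulSMul A L] [Algebra.IsAlgebraic A L] :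
    ringKrullDim A = ((trdeg k L).toENat : WithBot ℕ∞) := by
  have : IsDomain A := (FaithfulSMul.algebraMap_injective A L).isDomain _
  obtain ⟨s, g, hg, hint⟩ := exists_integral_inj_algHom_of_fg k A
  let _ := g.toRingHom.toAlgebra
  let _ := ((algebraMap A L).comp g.toRingHom).toAlgebra
  have : IsScalarTower k (MvPolynomial (Fin s) k) A := .of_algebraMap_eq' g.comp_algebraMap.symm
  have : IsScalarTower (MvPolynomial (Fin s) k) A L := .of_algebraMap_eq' rfl
  have : IsScalarTower k (MvPolynomial (Fin s) k) L := .to₁₂₄ k _ A L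
  have : Algebra.IsIntegral (MvPolynomial (Fin s) k) A := ⟨hint⟩
  have : FaithfulSMul (MvPolynomial (Fin s) k) A :=
    (faithfulSMul_iff_algebraMap_injective _ _).2 hg
  have : FaithfulSMul (MvPolynomial (Fin s) k) L := .trans _ A _
  have : Algebra.IsAlgebraic (MvPolynomial (Fin s) k) L := .trans _ A _
  have htr : (s : Cardinal) = trdeg k L := by
    simpa [MvPolynomial.trdeg_of_isDomain, trdeg_eq_zero] using
      lift_trdeg_add_eq (R := k) (S := MvPolynomial (Fin s) k) (A := L)
  rw [ringKrullDim_eq_of_isIntegral (MvPolynomial (Fin s) k) A,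
    MvPolynomial.ringKrullDim_of_isNoetherianRing, ← htr]
  simp

theorem isAlgebraic_of_quasiFinite (R S : Type*) [CommRing R] [IsDomain R] [CommRing S] [IsDomain S]
    [Algebra R S] [FaithfulSMul R S] [QuasiFinite R S] : Algebra.IsAlgebraic R S := by
  have : FaithfulSMul R (FractionRing S) := .trans R S _
  let _ := FractionRing.liftAlgebra R (FractionRing S)
  have : QuasiFinite R (FractionRing S) := .of_isLocalization (nonZeroDivisors S)
  have : QuasiFinite (FractionRing R) (FractionRing S) := .of_restrictScalars R _ _
  have : Module.Finite (FractionRing R) (FractionRing S) := .of_quasiFinite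
  have : Algebra.IsAlgebraic R (FractionRing R) :=
    IsLocalization.isAlgebraic _ (nonZeroDivisors R)
  have : Algebra.IsAlgebraic R (FractionRing S) := .trans R (FractionRing R) _
  exact .tower_bot_of_injective (A := FractionRing S) (FaithfulSMul.algebraMap_injective _ _)

theorem ringKrullDim_quotient_eq_of_quasiFinite (k : Type*) {A B : Type*} [Field k] [CommRing A]
    [CommRing B] [Algebra k A] [FiniteType k A] [Algebra k B] [FiniteType k B] [Algebra A B]
    [IsScalarTower k A B] [QuasiFinite A B] (q : Ideal B) [q.IsPrime] :
    ringKrullDim (B ⧸ q) = ringKrullDim (A ⧸ q.under A) := by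
  have : FaithfulSMul (A ⧸ q.under A) (B ⧸ q) :=
    (faithfulSMul_iff_algebraMap_injective _ _).2 Ideal.algebraMap_quotient_injective
  have : QuasiFinite (A ⧸ q.under A) (B ⧸ q) := .of_restrictScalars A _ _
  have := isAlgebraic_of_quasiFinite (A ⧸ q.under A) (B ⧸ q)
  rw [ringKrullDim_eq_trdeg_of_isAlgebraic k (A ⧸ q.under A) (B ⧸ q),
    ringKrullDim_eq_trdeg_of_isAlgebraic k (B ⧸ q) (B ⧸ q)]

theorem under_mem_minimalPrimes_of_hasGoingDown (A : Type*) {B : Type*} [CommRing A] [CommRing B]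
    [Algebra A B] [HasGoingDown A B] {q : Ideal B} (hq : q ∈ minimalPrimes B) :
    q.under A ∈ minimalPrimes A := by
  have := hq.1.1
  refine ⟨⟨inferInstance, bot_le⟩, fun p ⟨_, _⟩ hpq => ?_⟩
  obtain ⟨q', hq', _, hover⟩ := Ideal.exists_ideal_le_liesOver_of_le (p := p) (q := q.under A) q hpq
  rw [le_antisymm hq' (hq.2 ⟨‹_›, bot_le⟩ hq')] at hover
  exact hover.over.ge

theorem ringKrullDim_quotient_minimalPrime_of_etale {k B : Type*} [Field k] [CommRing B]
    [Algebra k B] {n : ℕ} [Algebra (MvPolynomial (Fin n) k) B]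
    [IsScalarTower k (MvPolynomial (Fin n) k) B] [Etale (MvPolynomial (Fin n) k) B]
    {q : Ideal B} (hq : q ∈ minimalPrimes B) : ringKrullDim (B ⧸ q) = n := by
  have := hq.1.1
  have : FiniteType k B := .trans (S := MvPolynomial (Fin n) k) inferInstance inferInstance
  have hbot : q.under (MvPolynomial (Fin n) k) = ⊥ := by
    simpa only [IsDomain.minimalPrimes_eq_singleton_bot, Set.mem_singleton_iff] using
      under_mem_minimalPrimes_of_hasGoingDown (MvPolynomial (Fin n) k) hq
  rw [ringKrullDim_quotient_eq_of_quasiFinite k (A := MvPolynomial (Fin n) k), hbot,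
    ringKrullDim_eq_of_ringEquiv (RingEquiv.quotientBot _),
    MvPolynomial.ringKrullDim_of_isNoetherianRing]
  simp

end KrullDimension

section LocallyDomain

open Algebra TensorProduct

theorem isIntegrallyClosedIn_tensorProduct_of_smooth (R S A : Type*) [CommRing R] [CommRing S]
    [CommRing A] [Algebra R S] [Algebra R A] [IsIntegrallyClosedIn R A] [Smooth R S] :
    IsIntegrallyClosedIn S (S ⊗[R] A) := by
  refine isIntegrallyClosedIn_iff.2 ⟨TensorProduct.includeLeft_injective (S := S)
    (isIntegrallyClosedIn_iff.1 inferInstance).1, fun {x} hx => ?_⟩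
  obtain ⟨z, hz⟩ :=
    (TensorProduct.toIntegralClosure_bijective_of_smooth (R := R) (S := S) (B := A)).2 ⟨x, hx⟩
  suffices ∃ y, algebraMap S _ y = (TensorProduct.toIntegralClosure R S A z : S ⊗[R] A) by
    rwa [hz] at this
  clear hz
  induction z with
  | zero => exact ⟨0, by simp⟩
  | add z w hz hw =>
    obtain ⟨s, hs⟩ := hz
    obtain ⟨t, ht⟩ := hw
    exact ⟨s + t, by rw [map_add, map_add, hs, ht]; rfl⟩
  | tmul s y =>
    obtain ⟨r, hr⟩ := IsIntegrallyClosedIn.isIntegral_iff.1 y.2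
    refine ⟨r • s, ?_⟩
    simp [TensorProduct.toIntegralClosure, ← hr, Algebra.algebraMap_eq_smul_one r, smul_tmul']

theorem exists_mul_mul_eq_self {L : Type*} [CommRing L] [IsReduced L] [IsArtinianRing L] (a : L) :
    ∃ x, a * x * a = a := by
  obtain ⟨n, x, hx⟩ := IsArtinian.exists_pow_succ_smul_dvd a (1 : L)
  have hpow : a ^ n * (1 - a * x) = 0 := by
    simp only [smul_eq_mul, mul_one, pow_succ] at hx
    linear_combination -hx
  have hnil : (a * (1 - a * x)) ^ (n + 1) = 0 := by
    rw [mul_pow]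
    linear_combination (1 - a * x) ^ n * a * hpow
  exact ⟨x, by linear_combination -(pow_eq_zero_iff n.succ_ne_zero).1 hnil⟩

theorem exists_mul_eq_self_and_mul_eq_zero {B : Type*} (L : Type*) [CommRing B] [CommRing L]
    [Algebra B L] [IsIntegrallyClosedIn B L] [IsReduced L] [IsArtinianRing L] {a b : B}
    (hab : a * b = 0) : ∃ e, e * a = a ∧ e * b = 0 := by
  have hinj : Function.Injective (algebraMap B L) := (isIntegrallyClosedIn_iff.1 inferInstance).1
  obtain ⟨x, hx⟩ := exists_mul_mul_eq_self (algebraMap B L a)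
  have hidem : algebraMap B L a * x * (algebraMap B L a * x) = algebraMap B L a * x := by
    linear_combination x * hx
  -- Idempotents are integral, so those of `L` already lie in `B`.
  obtain ⟨e, he⟩ := IsIntegrallyClosedIn.isIntegral_iff.1
    (show IsIntegral B (algebraMap B L a * x) from
      ⟨.X ^ 2 - .X, by monicity!, by simp [pow_two, hidem]⟩)
  refine ⟨e, hinj ?_, hinj ?_⟩
  · rw [map_mul, he, hx]
  · rw [map_mul, he, mul_right_comm, ← map_mul, hab, map_zero, zero_mul]

theorem isDomain_localization_of_isIntegrallyClosedIn {B : Type*} (L : Type*) [CommRing B]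
    [CommRing L] [Algebra B L] [IsIntegrallyClosedIn B L] [IsReduced L] [IsArtinianRing L]
    (n : Ideal B) [n.IsPrime] : IsDomain (Localization.AtPrime n) := by
  have : NoZeroDivisors (Localization.AtPrime n) := ⟨fun {x y} hxy => by
    obtain ⟨a, s, rfl⟩ := IsLocalization.exists_mk'_eq n.primeCompl x
    obtain ⟨b, t, rfl⟩ := IsLocalization.exists_mk'_eq n.primeCompl y
    rw [← IsLocalization.mk'_mul, IsLocalization.mk'_eq_zero_iff] at hxy
    obtain ⟨c, hc⟩ := hxy
    obtain ⟨e, hea, heb⟩ := exists_mul_eq_self_and_mul_eq_zero L (mul_assoc (c : B) a b ▸ hc)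
    simp only [IsLocalization.mk'_eq_zero_iff]
    by_cases he : e ∈ n
    · have hne : 1 - e ∉ n := fun h =>
        Ideal.IsPrime.one_notMem ‹_› (by simpa using add_mem h he)
      exact .inl ⟨⟨1 - e, hne⟩ * c, by
        rw [Submonoid.coe_mul, mul_assoc, sub_mul, one_mul, hea, sub_self]⟩
    · exact .inr ⟨⟨e, he⟩, heb⟩⟩
  exact NoZeroDivisors.to_isDomain _

theorem isDomain_localization_of_etale (P : Type*) {B : Type*} [CommRing P] [IsDomain P]
    [IsIntegrallyClosed P] [CommRing B] [Algebra P B] [Etale P B] (n : Ideal B) [n.IsPrime] :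
    IsDomain (Localization.AtPrime n) := by
  let e : FractionRing P ⊗[P] B ≃ₐ[P] B ⊗[P] FractionRing P :=
    Algebra.TensorProduct.comm _ _ _
  have : Module.Finite (FractionRing P) (FractionRing P ⊗[P] B) :=
    FormallyUnramified.finite_of_free _ _
  have : IsArtinianRing (FractionRing P ⊗[P] B) := .of_finite (FractionRing P) _
  have : IsArtinianRing (B ⊗[P] FractionRing P) := e.toRingEquiv.isArtinianRing
  have : IsReduced (FractionRing P ⊗[P] B) :=
    FormallyUnramified.isReduced_of_field (FractionRing P) _
  have : IsReduced (B ⊗[P] FractionRing P) := isReduced_of_injective e.symm e.symm.injective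
  have := isIntegrallyClosedIn_tensorProduct_of_smooth P B (FractionRing P)
  exact isDomain_localization_of_isIntegrallyClosedIn (B ⊗[P] FractionRing P) n

end LocallyDomain

section UnramifiedOverNormal

open Algebra

theorem mem_minimalPrimes_of_ringKrullDim_le {B : Type*} [CommRing B] (hB : ringKrullDim B ≠ ⊤)
    (Q : Ideal B) [Q.IsPrime] (hQ : ringKrullDim B ≤ ringKrullDim (B ⧸ Q)) :
    Q ∈ minimalPrimes B := by
  obtain ⟨p, hp, hpQ⟩ := Ideal.exists_minimalPrimes_le (bot_le : ⊥ ≤ Q)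
  have := hp.1.1
  obtain rfl | hlt := hpQ.eq_or_lt
  · exact hp
  obtain ⟨x, hxQ, hxp⟩ := Set.exists_of_ssubset hlt
  have hsucc : ringKrullDim (B ⧸ Q) + 1 ≤ ringKrullDim (B ⧸ p) :=
    ringKrullDim_succ_le_of_surjective (Ideal.Quotient.factor hpQ)
      (Ideal.Quotient.factor_surjective hpQ) (r := Ideal.Quotient.mk p x)
      (by rwa [mem_nonZeroDivisors_iff_ne_zero, Ne, Ideal.Quotient.eq_zero_iff_mem])
      (by simpa [Ideal.Quotient.eq_zero_iff_mem] using hxQ)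
  have hle : ringKrullDim B + 1 ≤ ringKrullDim B :=
    (add_le_add_left hQ 1).trans (hsucc.trans (ringKrullDim_quotient_le p))
  have : Nontrivial B := (Ideal.Quotient.mk Q).domain_nontrivial
  have hB' : ringKrullDim B ≠ ⊥ :=
    ((WithBot.bot_lt_coe 0).trans_le ringKrullDim_nonneg_of_nontrivial).ne'
  revert hB hB' hle
  cases ringKrullDim B using WithBot.recBotCoe with
  | bot => simp
  | coe d => cases d using ENat.recTopCoe <;> norm_cast <;> simp

theorem isLocalization_atPrime_of_surjective {B A : Type*} [CommRing B] [CommRing A] [Algebra B A]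
    (hsurj : Function.Surjective (algebraMap B A)) {q n : Ideal A} [n.IsPrime]
    [IsDomain (Localization.AtPrime (n.under B))] (hqn : q ≤ n) (hq : q.under B ∈ minimalPrimes B) :
    IsLocalization.AtPrime (Localization.AtPrime n) (n.under B) := by
  have hker : ∀ b, algebraMap B A b = 0 → ∃ s : (n.under B).primeCompl, s * b = 0 := by
    intro b hb
    rw [← IsLocalization.map_eq_zero_iff _ (Localization.AtPrime (n.under B))]
    refine hq.2 ⟨RingHom.ker_isPrime (algebraMap B (Localization.AtPrime (n.under B))), bot_le⟩
      (fun c hc => ?_) (show b ∈ q.under B by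
        rw [Ideal.mem_comap, hb]; exact zero_mem q)
    obtain ⟨s, hs⟩ := (IsLocalization.map_eq_zero_iff (n.under B).primeCompl _ c).1 hc
    exact (hq.1.1.mem_or_mem (hs ▸ zero_mem _ : (s : B) * c ∈ q.under B)).resolve_left
      fun h => s.2 (Ideal.comap_mono hqn h)
  refine ⟨?_, ?_, fun {x y} hxy => ?_⟩
  · rintro ⟨s, hs⟩
    rw [IsScalarTower.algebraMap_apply B A]
    exact IsLocalization.map_units (Localization.AtPrime n) (⟨algebraMap B A s, hs⟩ : n.primeCompl)
  · intro z
    obtain ⟨⟨a, s, hs⟩, hz⟩ := IsLocalization.surj n.primeCompl z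
    obtain ⟨a, rfl⟩ := hsurj a
    obtain ⟨s, rfl⟩ := hsurj s
    exact ⟨⟨a, s, hs⟩, by
      simpa only [IsScalarTower.algebraMap_apply B A (Localization.AtPrime n)] using hz⟩
  · simp only [IsScalarTower.algebraMap_apply B A (Localization.AtPrime n)] at hxy
    obtain ⟨⟨c, hc⟩, hxy⟩ := IsLocalization.exists_of_eq (M := n.primeCompl) hxy
    obtain ⟨c, rfl⟩ := hsurj c
    obtain ⟨s, hs⟩ := hker (c * (x - y)) (by
      rw [map_mul, map_sub, mul_sub, sub_eq_zero]; exact hxy)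
    exact ⟨s * ⟨c, hc⟩, by simp only [Submonoid.coe_mul]; linear_combination hs⟩

theorem isSmoothAt_of_etale_surjection {P B A : Type*} [CommRing P] [IsDomain P]
    [IsIntegrallyClosed P] [CommRing B] [Algebra P B] [Etale P B] [CommRing A] [Algebra P A]
    (φ : B →ₐ[P] A) (hφ : Function.Surjective φ) (hP : ringKrullDim P ≠ ⊤) {q n : Ideal A}
    [q.IsPrime] [n.IsPrime] (hqn : q ≤ n) (hq : ringKrullDim P ≤ ringKrullDim (A ⧸ q)) :
    IsSmoothAt P n := by
  let _ := φ.toRingHom.toAlgebra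
  have : IsScalarTower P B A := .of_algebraMap_eq' φ.comp_algebraMap.symm
  have hBP : ringKrullDim B ≤ ringKrullDim P := ringKrullDim_le_of_quasiFinite P B
  have hquot : ringKrullDim (B ⧸ q.under B) = ringKrullDim (A ⧸ q) :=
    ringKrullDim_eq_of_ringEquiv (.ofBijective (algebraMap (B ⧸ q.under B) (A ⧸ q))
      ⟨Ideal.algebraMap_quotient_injective, .of_comp (g := Ideal.Quotient.mk _) <|
        Ideal.Quotient.mk_surjective.comp hφ⟩)
  have hmin : q.under B ∈ minimalPrimes B :=
    mem_minimalPrimes_of_ringKrullDim_le (hBP.trans_lt (lt_top_iff_ne_top.2 hP)).ne _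
      (hBP.trans (hq.trans_eq hquot.symm))
  have := isDomain_localization_of_etale P (n.under B)
  have := isLocalization_atPrime_of_surjective hφ hqn hmin
  have : FormallySmooth B (Localization.AtPrime n) := .of_isLocalization (n.under B).primeCompl
  exact .comp P B _

theorem isSmoothAt_of_isUnramifiedAt (k : Type*) {P A : Type*} [Field k] [CommRing P] [IsDomain P]
    [IsIntegrallyClosed P] [CommRing A] [Algebra k A] [FiniteType k A] [Algebra P A]
    [FiniteType P A] (hP : ringKrullDim P ≠ ⊤) {q n : Ideal A} [q.IsPrime] [n.IsPrime]
    [IsUnramifiedAt P n] (hqn : q ≤ n) (hq : ringKrullDim P ≤ ringKrullDim (A ⧸ q)) :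
    IsSmoothAt P n := by
  obtain ⟨f, hf, E, φ, hφ⟩ := IsUnramifiedAt.exists_hasStandardEtaleSurjectionOn (R := P) n
  have hdisj {p : Ideal A} [p.IsPrime] (hp : p ≤ n) :
      Disjoint (Submonoid.powers f : Set A) (p : Set A) :=
    (Ideal.disjoint_powers_iff_notMem_of_isPrime _).2 fun h => hf (hp h)
  have hprime {p : Ideal A} [p.IsPrime] (hp : p ≤ n) :
      (p.map (algebraMap A (Localization.Away f))).IsPrime :=
    IsLocalization.isPrime_of_isPrime_disjoint (.powers f) _ _ ‹_› (hdisj hp)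
  have hunder {p : Ideal A} [p.IsPrime] (hp : p ≤ n) :
      (p.map (algebraMap A (Localization.Away f))).under A = p :=
    IsLocalization.under_map_of_isPrime_disjoint (.powers f) _ ‹_› (hdisj hp)
  have := hprime hqn
  have := hprime le_rfl
  have : FiniteType k (Localization.Away f) := .trans (S := A) inferInstance inferInstance
  have hsm : IsSmoothAt P (n.map (algebraMap A (Localization.Away f))) :=
    isSmoothAt_of_etale_surjection φ hφ hP (Ideal.map_mono hqn) (by
      rwa [ringKrullDim_quotient_eq_of_quasiFinite k (A := A), hunder hqn])
  have hmem : ⟨_, hprime le_rfl⟩ ∈ smoothLocus P (Localization.Away f) := hsm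
  rw [← smoothLocus_comap_of_isLocalization f, Set.mem_preimage] at hmem
  have hcomap : PrimeSpectrum.comap (algebraMap A (Localization.Away f)) ⟨_, hprime le_rfl⟩ =
      ⟨n, ‹_›⟩ := PrimeSpectrum.ext (hunder le_rfl)
  rw [hcomap] at hmem
  exact hmem

end UnramifiedOverNormal

section UnramifiedCoordinates

open Algebra TensorProduct KaehlerDifferential

theorem isUnramifiedAt_of_span_eq_top {R S A ι : Type*} [CommRing R] [CommRing S] [CommRing A]
    [Algebra R S] [Algebra S A] [Algebra R A] [IsScalarTower R S A] [FiniteType S A]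
    (n : Ideal A) [n.IsPrime] (a : ι → S)
    (ha : Submodule.span n.ResidueField
      (Set.range fun i => (1 : n.ResidueField) ⊗ₜ[A] D R A (algebraMap S A (a i))) = ⊤) :
    IsUnramifiedAt S n := by
  let π : n.ResidueField ⊗[A] Ω[A⁄R] →ₗ[n.ResidueField] n.ResidueField ⊗[A] Ω[A⁄S] :=
    (KaehlerDifferential.map R S A A).baseChange n.ResidueField
  have hπ : Function.Surjective π :=
    LinearMap.lTensor_surjective _ (KaehlerDifferential.map_surjective R S A)
  have hπ_zero : π = 0 := by
    refine LinearMap.ext_on_range ha fun i => ?_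
    simp [π]
  have : (⟨n, ‹_›⟩ : PrimeSpectrum A) ∈ unramifiedLocus S A := by
    rw [unramifiedLocus_eq_compl_support, Set.mem_compl_iff,
      Module.mem_support_iff_nontrivial_residueField_tensorProduct, not_nontrivial_iff_subsingleton]
    exact ⟨fun z w => by
      obtain ⟨z, rfl⟩ := hπ z
      obtain ⟨w, rfl⟩ := hπ w
      simp only [hπ_zero, LinearMap.zero_apply]⟩
  exact this

theorem exists_isUnramifiedAt_mvPolynomial (R : Type*) {A : Type*} [CommRing R] [CommRing A]
    [Algebra R A] [FiniteType R A] (n : Ideal A) [n.IsPrime] {r : ℕ}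
    (hr : Module.finrank n.ResidueField (n.ResidueField ⊗[A] Ω[A⁄R]) = r) :
    ∃ (_ : Algebra (MvPolynomial (Fin r) R) A),
      IsScalarTower R (MvPolynomial (Fin r) R) A ∧ IsUnramifiedAt (MvPolynomial (Fin r) R) n := by
  have hspan : Submodule.span n.ResidueField
      (Set.range fun a => (1 : n.ResidueField) ⊗ₜ[A] D R A a) = ⊤ := by
    have := congrArg (Submodule.baseChange n.ResidueField) (span_range_derivation R A)
    rw [Submodule.baseChange_span, Submodule.baseChange_top] at this
    rw [← this, ← Set.range_comp]
    rfl
  have hbasis := Submodule.exists_fun_fin_finrank_span_eq n.ResidueField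
    (Set.range fun a => (1 : n.ResidueField) ⊗ₜ[A] D R A a)
  rw [hspan, finrank_top, hr] at hbasis
  obtain ⟨v, hv, hvspan, -⟩ := hbasis
  choose a ha using hv
  let _ := (MvPolynomial.aeval (R := R) a).toAlgebra
  have : IsScalarTower R (MvPolynomial (Fin r) R) A :=
    .of_algebraMap_eq' (MvPolynomial.aeval (R := R) a).comp_algebraMap.symm
  have : FiniteType (MvPolynomial (Fin r) R) A := .of_restrictScalars_finiteType R _ _
  refine ⟨inferInstance, inferInstance, isUnramifiedAt_of_span_eq_top (R := R) n MvPolynomial.X ?_⟩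
  have hav : (fun i => (1 : n.ResidueField) ⊗ₜ[A] D R A
      (algebraMap (MvPolynomial (Fin r) R) A (.X i))) = v := funext fun i => by
    rw [← ha i]
    exact congrArg (fun b => (1 : n.ResidueField) ⊗ₜ D R A b) (MvPolynomial.aeval_X a i)
  rw [hav, hvspan]

attribute [local instance] MvPolynomial.algebraMvPolynomial in
theorem etale_mvPolynomial (P R σ : Type*) [CommRing P] [CommRing R] [Algebra P R]
    [Etale P R] : Etale (MvPolynomial σ P) (MvPolynomial σ R) :=
  .of_equiv (IsPushout.equiv P (MvPolynomial σ P) R (MvPolynomial σ R))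

theorem finrank_residueField_tensor_eq {A F M N : Type*} [CommRing A] [CommRing F] [Algebra A F]
    [AddCommGroup M] [Module A M] [AddCommGroup N] [Module F N] (e : F ⊗[A] M ≃ₗ[F] N)
    (m : Ideal F) [m.IsPrime] :
    Module.finrank m.ResidueField (m.ResidueField ⊗[F] N) =
      Module.finrank (m.under A).ResidueField ((m.under A).ResidueField ⊗[A] M) := by
  let _ := Localization.AtPrime.algebraOfLiesOver (m.under A) m
  let e' : m.ResidueField ⊗[F] N ≃ₗ[m.ResidueField]
      m.ResidueField ⊗[(m.under A).ResidueField] ((m.under A).ResidueField ⊗[A] M) :=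
    (AlgebraTensorModule.congr (.refl _ _) e.symm).trans
      ((AlgebraTensorModule.cancelBaseChange A F _ _ M).trans
        (AlgebraTensorModule.cancelBaseChange A (m.under A).ResidueField _ _ M).symm)
  rw [e'.finrank_eq, Module.finrank_baseChange]

theorem exists_minimalPrimes_ringKrullDim_quotient_eq {k F : Type*} [Field k] [CommRing F]
    [Algebra k F] [FinitePresentation k F] (m : Ideal F) [m.IsPrime] [IsSmoothAt k m] :
    ∃ q ∈ minimalPrimes F, ringKrullDim (F ⧸ q) =
      Module.finrank m.ResidueField (m.ResidueField ⊗[F] Ω[F⁄k]) := by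
  obtain ⟨f, hf, n, _, _, _⟩ := IsSmoothAt.exists_isStandardEtale_mvPolynomial (R := k) (p := m)
  let F' := Localization.Away f
  have hdisj : Disjoint (Submonoid.powers f : Set F) (m : Set F) :=
    (Ideal.disjoint_powers_iff_notMem_of_isPrime _).2 hf
  obtain ⟨m', hm', rfl⟩ : ∃ m' : Ideal F', m'.IsPrime ∧ m'.under F = m :=
    ⟨m.map (algebraMap F F'),
      IsLocalization.isPrime_of_isPrime_disjoint (.powers f) F' m ‹_› hdisj,
      IsLocalization.under_map_of_isPrime_disjoint (.powers f) F' ‹_› hdisj⟩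
  have : Etale F F' := .of_isLocalizationAway f
  obtain ⟨q', hq', -⟩ := Ideal.exists_minimalPrimes_le (bot_le : ⊥ ≤ m')
  have := hq'.1.1
  refine ⟨q'.under F, under_mem_minimalPrimes_of_hasGoingDown F hq', ?_⟩
  rw [← ringKrullDim_quotient_eq_of_quasiFinite k,
    ringKrullDim_quotient_minimalPrime_of_etale (k := k) (n := n) hq',
    ← finrank_residueField_tensor_eq (tensorKaehlerEquivOfFormallyEtale k F F'),
    finrank_residueField_tensor_eq
      (tensorKaehlerEquivOfFormallyEtale k (MvPolynomial (Fin n) k) F'),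
    Module.finrank_baseChange, Module.finrank_eq_card_basis (mvPolynomialBasis k (Fin n)),
    Fintype.card_fin]

attribute [local instance] MvPolynomial.algebraMvPolynomial in
theorem isSmoothAt_of_isSmoothAt_isPushout {k R A κ F : Type*} {d : ℕ} [Field k] [CommRing R]
    [CommRing A] [Field κ] [CommRing F] [Algebra k A] [FiniteType k A] [Algebra k R]
    [Algebra (MvPolynomial (Fin d) k) R] [IsScalarTower k (MvPolynomial (Fin d) k) R]
    [Etale (MvPolynomial (Fin d) k) R] [Algebra R A] [IsScalarTower k R A] [Algebra R κ]
    [Algebra R F] [Algebra κ F] [Algebra A F] [IsScalarTower R κ F] [IsScalarTower R A F]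
    [IsPushout R κ A F] [FinitePresentation κ F] (m : Ideal F) [m.IsPrime] [IsSmoothAt κ m]
    (hdim : ∀ q ∈ minimalPrimes A, ∀ q' ∈ minimalPrimes F,
      ringKrullDim (F ⧸ q') + d ≤ ringKrullDim (A ⧸ q)) :
    IsSmoothAt R (m.under A) := by
  obtain ⟨q', hq', hq'r⟩ := exists_minimalPrimes_ringKrullDim_quotient_eq (k := κ) m
  set r := Module.finrank m.ResidueField (m.ResidueField ⊗[F] Ω[F⁄κ])
  obtain ⟨q, hq, hqm⟩ := Ideal.exists_minimalPrimes_le (bot_le : ⊥ ≤ m.under A)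
  have := hq.1.1
  have : FiniteType R A := .of_restrictScalars_finiteType k R A
  obtain ⟨_, _, hunr⟩ := exists_isUnramifiedAt_mvPolynomial R (m.under A)
    (finrank_residueField_tensor_eq (tensorKaehlerEquiv R κ A F) m).symm
  let P := MvPolynomial (Fin r) (MvPolynomial (Fin d) k)
  let S := MvPolynomial (Fin r) R
  have : Etale P S := etale_mvPolynomial _ _ _
  let _ : Algebra P A := ((algebraMap S A).comp (algebraMap P S)).toAlgebra
  have : IsScalarTower P S A := .of_algebraMap_eq' rfl
  have : IsScalarTower k S A := .to₁₃₄ k R S A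
  have : IsScalarTower k P S := .to₁₃₄ k (MvPolynomial (Fin d) k) P S
  have : IsScalarTower k P A := .to₁₂₄ k P S A
  have : FiniteType P A := .of_restrictScalars_finiteType k P A
  have : IsUnramifiedAt P (m.under A) := FormallyUnramified.comp P S _
  have hP : ringKrullDim P = r + d := by
    rw [MvPolynomial.ringKrullDim_of_isNoetherianRing,
      MvPolynomial.ringKrullDim_of_isNoetherianRing]
    simp [add_comm]
  have hP_ne_top : ringKrullDim P ≠ ⊤ := by
    rw [hP]
    exact WithBot.coe_injective.ne (ENat.natCast_ne_top (r + d))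
  have hPq : ringKrullDim P ≤ ringKrullDim (A ⧸ q) := by
    rw [hP, ← hq'r]
    exact hdim q hq q' hq'
  have : IsSmoothAt P (m.under A) := isSmoothAt_of_isUnramifiedAt k hP_ne_top hqm hPq
  have : FormallySmooth S (Localization.AtPrime (m.under A)) := .of_restrictScalars (R := P) ..
  exact .comp R S _

end UnramifiedCoordinates

section IrreducibleComponents

open TopologicalSpace Topology

theorem topologicalKrullDim_le_of_forall_mem_range {T : Type*} [TopologicalSpace T] (d : WithBot ℕ∞)
    (h : ∀ z : T, ∃ (U : Type u) (_ : TopologicalSpace U) (f : U → T),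
      IsOpenEmbedding f ∧ z ∈ Set.range f ∧ topologicalKrullDim U ≤ d) :
    topologicalKrullDim T ≤ d := by
  cases isEmpty_or_nonempty (IrreducibleCloseds T) with
  | inl hempty =>
    rw [topologicalKrullDim, Order.krullDim_eq_bot]
    exact bot_le
  | inr hne =>
    rw [topologicalKrullDim, Order.krullDim_eq_iSup_coheight]
    refine iSup_le fun Z => ?_
    obtain ⟨z, hz⟩ := Z.isIrreducible.nonempty
    obtain ⟨U, _, f, hf, ⟨u, rfl⟩, hd⟩ := h z
    obtain ⟨W, hW⟩ := (IrreducibleCloseds.orderIsoOfIsOpenEmbedding f hf).surjective ⟨Z, u, hz⟩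
    obtain rfl : IrreducibleCloseds.map f hf.continuous W = Z := congrArg Subtype.val hW
    rw [hf.coheight_map]
    exact (Order.coheight_le_krullDim W).trans hd

theorem exists_isOpenEmbedding_closure_singleton {A T : Type*} [CommRing A] [TopologicalSpace T]
    {φ : PrimeSpectrum A → T} (hφ : IsOpenEmbedding φ) (q : PrimeSpectrum A) :
    ∃ ψ : PrimeSpectrum (A ⧸ q.asIdeal) → closure {φ q},
      IsOpenEmbedding ψ ∧ Set.range ψ = Subtype.val ⁻¹' Set.range φ := by
  let π := PrimeSpectrum.comap (Ideal.Quotient.mk q.asIdeal)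
  have hπ : IsClosedEmbedding π :=
    PrimeSpectrum.isClosedEmbedding_comap_of_surjective _ _ Ideal.Quotient.mk_surjective
  have hclosure : φ ⁻¹' closure {φ q} = Set.range π := by
    rw [← Set.image_singleton, ← hφ.isInducing.closure_eq_preimage_closure_image,
      PrimeSpectrum.closure_singleton,
      range_comap_of_surjective _ _ Ideal.Quotient.mk_surjective, Ideal.mk_ker]
  have hmem (p) : (φ ∘ π) p ∈ closure {φ q} := hclosure.ge ⟨p, rfl⟩
  have hrange : Set.range (Set.codRestrict (φ ∘ π) _ hmem) = Subtype.val ⁻¹' Set.range φ := by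
    ext ⟨c, hc⟩
    constructor
    · rintro ⟨p, hp⟩
      exact ⟨π p, congrArg Subtype.val hp⟩
    · rintro ⟨p, rfl⟩
      obtain ⟨p, rfl⟩ := hclosure.le hc
      exact ⟨p, rfl⟩
  refine ⟨_, ⟨(hφ.isEmbedding.comp hπ.isEmbedding).codRestrict _ hmem, ?_⟩, hrange⟩
  rw [hrange]
  exact hφ.isOpen_range.preimage continuous_subtype_val

theorem closure_mem_irreducibleComponents_of_mem_minimalPrimes {A T : Type*} [CommRing A]
    [TopologicalSpace T] [QuasiSober T] {φ : PrimeSpectrum A → T} (hφ : IsOpenEmbedding φ)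
    {q : PrimeSpectrum A} (hq : q.asIdeal ∈ minimalPrimes A) :
    closure {φ q} ∈ irreducibleComponents T := by
  obtain ⟨Z, hZ, hqZ⟩ := exists_mem_irreducibleComponents_subset_of_isIrreducible _
    (isIrreducible_singleton (x := φ q)).closure
  obtain ⟨z, hz⟩ := QuasiSober.sober hZ.1 (isClosed_of_mem_irreducibleComponents _ hZ)
  have hspec : z ⤳ φ q := by
    rw [specializes_iff_mem_closure, hz.def]
    exact hqZ (subset_closure rfl)
  obtain ⟨p, rfl⟩ := hspec.mem_open hφ.isOpen_range ⟨q, rfl⟩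
  rw [hφ.isInducing.specializes_iff, ← PrimeSpectrum.le_iff_specializes] at hspec
  obtain rfl : p = q := le_antisymm hspec (hq.2 ⟨p.2, bot_le⟩ hspec)
  rwa [hz.def]

end IrreducibleComponents

section SchemesOverField

open Topology

variable {k : Type u} [Field k] {X Y : Scheme.{u}}

/-- The ring homomorphism `k → Γ(X, V)` by which sections of a `k`-scheme form a `k`-algebra. -/
noncomputable def baseFieldHom (sX : X ⟶ Spec (CommRingCat.of k)) (V : X.Opens) : k →+* Γ(X, V) :=
  ((Scheme.ΓSpecIso (CommRingCat.of k)).inv ≫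
    sX.appLE ⊤ V (show V ≤ sX ⁻¹ᵁ ⊤ from le_top)).hom

theorem baseFieldHom_map (sX : X ⟶ Spec (CommRingCat.of k)) {V W : X.Opens} (h : W ≤ V) :
    (X.presheaf.map (homOfLE h).op).hom.comp (baseFieldHom sX V) = baseFieldHom sX W := by
  rw [baseFieldHom, ← CommRingCat.hom_comp, Category.assoc, Scheme.Hom.appLE_map, baseFieldHom]

theorem baseFieldHom_appLE (f : X ⟶ Y) (sY : Y ⟶ Spec (CommRingCat.of k)) {U : Y.Opens}
    {V : X.Opens} (h : V ≤ f ⁻¹ᵁ U) :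
    (f.appLE U V h).hom.comp (baseFieldHom sY U) = baseFieldHom (f ≫ sY) V := by
  rw [baseFieldHom, ← CommRingCat.hom_comp, Category.assoc, Scheme.Hom.appLE_comp_appLE,
    baseFieldHom]

theorem finiteType_baseFieldHom (sX : X ⟶ Spec (CommRingCat.of k)) [LocallyOfFiniteType sX]
    {V : X.Opens} (hV : IsAffineOpen V) : (baseFieldHom sX V).FiniteType :=
  RingHom.finiteType_respectsIso.2 _
    (Scheme.ΓSpecIso (CommRingCat.of k)).symm.commRingCatIsoToRingEquiv
    (sX.finiteType_appLE (isAffineOpen_top _) hV _)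

theorem exists_etale_mvPolynomial_of_smooth (sY : Y ⟶ Spec (CommRingCat.of k)) [Smooth sY] (y : Y) :
    ∃ U : Y.Opens, IsAffineOpen U ∧ y ∈ U ∧ ∃ (d : ℕ) (φ : MvPolynomial (Fin d) k →+* Γ(Y, U)),
      φ.comp MvPolynomial.C = baseFieldHom sY U ∧ φ.Etale := by
  obtain ⟨W, hW, U, hU, hyU, hUW, hstd⟩ := Smooth.exists_isStandardSmooth sY y
  have : Subsingleton (Spec (CommRingCat.of k)) := inferInstanceAs (Subsingleton (PrimeSpectrum k))
  obtain rfl : W = ⊤ := top_le_iff.1 fun z _ => Subsingleton.elim (sY y) z ▸ hUW hyU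
  exact ⟨U, hU, hyU, RingHom.IsStandardSmooth.exists_etale_mvPolynomial <|
    RingHom.isStandardSmooth_respectsIso.2 _
      (Scheme.ΓSpecIso (CommRingCat.of k)).symm.commRingCatIsoToRingEquiv hstd⟩

theorem ringKrullDim_quotient_basicOpen (sX : X ⟶ Spec (CommRingCat.of k)) [LocallyOfFiniteType sX]
    {V W : X.Opens} (hV : IsAffineOpen V) (hW : IsAffineOpen W) {g : Γ(X, V)}
    (hg : W = X.basicOpen g) {q : PrimeSpectrum Γ(X, V)} {q' : PrimeSpectrum Γ(X, W)}
    (h : hV.fromSpec q = hW.fromSpec q') :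
    ringKrullDim (Γ(X, V) ⧸ q.asIdeal) = ringKrullDim (Γ(X, W) ⧸ q'.asIdeal) := by
  subst hg
  have hle : X.basicOpen g ≤ V := X.basicOpen_le g
  obtain rfl : q = Spec.map (X.presheaf.map (homOfLE hle).op) q' :=
    hV.fromSpec.isOpenEmbedding.injective <|
      h.trans (congr($(hV.map_fromSpec hW (homOfLE hle).op) q')).symm
  let _ := (baseFieldHom sX V).toAlgebra
  let _ := (baseFieldHom sX (X.basicOpen g)).toAlgebra
  have : IsScalarTower k Γ(X, V) Γ(X, X.basicOpen g) :=
    .of_algebraMap_eq' (baseFieldHom_map sX hle).symm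
  have : Algebra.FiniteType k Γ(X, V) := finiteType_baseFieldHom sX hV
  have : Algebra.FiniteType k Γ(X, X.basicOpen g) := finiteType_baseFieldHom sX hW
  have := hV.isLocalization_basicOpen g
  have : Algebra.Etale Γ(X, V) Γ(X, X.basicOpen g) := .of_isLocalizationAway g
  exact (ringKrullDim_quotient_eq_of_quasiFinite k q'.asIdeal).symm

theorem ringKrullDim_quotient_eq_of_fromSpec_eq (sX : X ⟶ Spec (CommRingCat.of k))
    [LocallyOfFiniteType sX] {V W : X.Opens} (hV : IsAffineOpen V) (hW : IsAffineOpen W)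
    {q : PrimeSpectrum Γ(X, V)} {q' : PrimeSpectrum Γ(X, W)} (h : hV.fromSpec q = hW.fromSpec q') :
    ringKrullDim (Γ(X, V) ⧸ q.asIdeal) = ringKrullDim (Γ(X, W) ⧸ q'.asIdeal) := by
  have hqV : hV.fromSpec q ∈ V := hV.range_fromSpec.le ⟨q, rfl⟩
  have hqW : hV.fromSpec q ∈ W := hW.range_fromSpec.le ⟨q', h.symm⟩
  obtain ⟨a, b, hab, ha⟩ := exists_basicOpen_le_affine_inter hV hW (hV.fromSpec q) ⟨hqV, hqW⟩
  have hD : IsAffineOpen (X.basicOpen a) := hV.basicOpen a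
  obtain ⟨p, hp⟩ : hV.fromSpec q ∈ Set.range hD.fromSpec := hD.range_fromSpec.ge ha
  rw [ringKrullDim_quotient_basicOpen sX hV hD rfl hp.symm,
    ringKrullDim_quotient_basicOpen sX hW hD hab (h.symm.trans hp.symm)]

theorem topologicalKrullDim_closure_le (sX : X ⟶ Spec (CommRingCat.of k)) [LocallyOfFiniteType sX]
    {V : X.Opens} (hV : IsAffineOpen V) {q : PrimeSpectrum Γ(X, V)} {x : X}
    (hq : hV.fromSpec q = x) :
    topologicalKrullDim (closure {x}) ≤ ringKrullDim (Γ(X, V) ⧸ q.asIdeal) := by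
  refine topologicalKrullDim_le_of_forall_mem_range.{u} _ fun z => ?_
  obtain ⟨_, ⟨W, hW, rfl⟩, hzW, -⟩ :=
    X.isBasis_affineOpens.exists_subset_of_mem_open (Set.mem_univ z.1) isOpen_univ
  have hW : IsAffineOpen W := hW
  have hxW : x ∈ W := (specializes_iff_mem_closure.2 z.2).mem_open W.2 hzW
  obtain ⟨p, rfl⟩ := hW.range_fromSpec.ge hxW
  obtain ⟨ψ, hψ, hrange⟩ :=
    exists_isOpenEmbedding_closure_singleton hW.fromSpec.isOpenEmbedding p
  refine ⟨_, _, ψ, hψ, hrange.ge (hW.range_fromSpec.ge hzW), ?_⟩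
  rw [ringKrullDim_quotient_eq_of_fromSpec_eq sX hV hW hq,
    PrimeSpectrum.topologicalKrullDim_eq_ringKrullDim]

theorem exists_topologicalKrullDim_le_ringKrullDim_quotient (sX : X ⟶ Spec (CommRingCat.of k))
    [LocallyOfFiniteType sX] {V : X.Opens} (hV : IsAffineOpen V) {q : Ideal Γ(X, V)}
    (hq : q ∈ minimalPrimes Γ(X, V)) :
    ∃ C ∈ irreducibleComponents X, topologicalKrullDim C ≤ ringKrullDim (Γ(X, V) ⧸ q) := by
  let p : Spec Γ(X, V) := ⟨q, hq.1.1⟩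
  have hmem : closure {hV.fromSpec p} ∈ irreducibleComponents X :=
    closure_mem_irreducibleComponents_of_mem_minimalPrimes hV.fromSpec.isOpenEmbedding hq
  exact ⟨_, hmem, topologicalKrullDim_closure_le sX hV (q := p) rfl⟩

theorem natCast_le_topologicalKrullDim_of_etale {d : ℕ} {U : Y.Opens} (hU : IsAffineOpen U) {y : Y}
    (hy : y ∈ U) {φ : MvPolynomial (Fin d) k →+* Γ(Y, U)} (hφ : φ.Etale) :
    d ≤ topologicalKrullDim Y := by
  let _ := φ.toAlgebra
  have : Algebra.Etale (MvPolynomial (Fin d) k) Γ(Y, U) := hφ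
  let _ : Algebra k Γ(Y, U) := (φ.comp MvPolynomial.C).toAlgebra
  have : IsScalarTower k (MvPolynomial (Fin d) k) Γ(Y, U) := .of_algebraMap_eq' rfl
  have := (hU.primeIdealOf ⟨y, hy⟩).isPrime
  obtain ⟨q, hq, -⟩ :=
    Ideal.exists_minimalPrimes_le (bot_le (a := (hU.primeIdealOf ⟨y, hy⟩).asIdeal))
  calc (d : WithBot ℕ∞) = ringKrullDim (Γ(Y, U) ⧸ q) :=
        (ringKrullDim_quotient_minimalPrime_of_etale (k := k) hq).symm
    _ ≤ ringKrullDim Γ(Y, U) := ringKrullDim_quotient_le q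
    _ = topologicalKrullDim (Spec Γ(Y, U)) :=
        (PrimeSpectrum.topologicalKrullDim_eq_ringKrullDim _).symm
    _ ≤ topologicalKrullDim Y := hU.fromSpec.isOpenEmbedding.isInducing.topologicalKrullDim_le

end SchemesOverField

section AffineFiber

variable {X Y : Scheme.{u}} (f : X ⟶ Y) {U : Y.Opens} {V : X.Opens}

theorem SpecMap_evaluation_fromSpec (hU : IsAffineOpen U) {y : Y} (hy : y ∈ U) :
    Spec.map (Y.evaluation U y hy) ≫ hU.fromSpec = Y.fromSpecResidueField y := by
  rw [Scheme.fromSpecResidueField, Scheme.evaluation, Spec.map_comp, Category.assoc,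
    ← hU.fromSpecStalk_eq_fromSpecStalk hy]
  rfl

theorem isPullback_SpecMap_evaluation (hU : IsAffineOpen U) (hV : IsAffineOpen V)
    (hVU : V ≤ f ⁻¹ᵁ U) {y : Y} (hy : y ∈ U) {F : CommRingCat.{u}} {inl : Γ(X, V) ⟶ F}
    {inr : Y.residueField y ⟶ F} (h : IsPushout (f.appLE U V hVU) (Y.evaluation U y hy) inl inr) :
    IsPullback (Spec.map inl) (Spec.map inr) (hV.fromSpec ≫ f) (Y.fromSpecResidueField y) := by
  have hpb := isPullback_SpecMap_of_isPushout _ _ _ _ h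
  rw [← IsAffineOpen.SpecMap_appLE_fromSpec f hU hV hVU, ← SpecMap_evaluation_fromSpec hU hy]
  exact ⟨⟨by rw [hpb.w_assoc]⟩,
    ⟨PullbackCone.isLimitOfCompMono _ _ hU.fromSpec _ hpb.isLimit⟩⟩

theorem exists_isOpenImmersion_fiber (hV : IsAffineOpen V) {y : Y} {F : CommRingCat.{u}}
    {inl : Γ(X, V) ⟶ F} {inr : Y.residueField y ⟶ F}
    (h : IsPullback (Spec.map inl) (Spec.map inr) (hV.fromSpec ≫ f) (Y.fromSpecResidueField y)) :
    ∃ j : Spec F ⟶ pullback f (Y.fromSpecResidueField y), IsOpenImmersion j ∧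
      j ≫ pullback.snd f (Y.fromSpecResidueField y) = Spec.map inr := by
  let j := pullback.lift (Spec.map inl ≫ hV.fromSpec) (Spec.map inr)
    ((Category.assoc _ _ _).trans h.w)
  have hj : j ≫ pullback.snd _ _ = Spec.map inr := pullback.lift_snd _ _ _
  have hpb : IsPullback j (Spec.map inl) (pullback.fst f (Y.fromSpecResidueField y)) hV.fromSpec :=
    .of_right (hj ▸ h.flip) (pullback.lift_fst _ _ _) (IsPullback.of_hasPullback _ _).flip
  exact ⟨j, MorphismProperty.of_isPullback (P := @IsOpenImmersion) hpb.flip inferInstance, hj⟩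

theorem exists_SpecMap_eq_primeIdealOf (hV : IsAffineOpen V) {x : X} (hx : x ∈ V)
    {F : CommRingCat.{u}} {inl : Γ(X, V) ⟶ F} {inr : Y.residueField (f x) ⟶ F}
    (h : IsPullback (Spec.map inl) (Spec.map inr) (hV.fromSpec ≫ f)
      (Y.fromSpecResidueField (f x))) :
    ∃ m : Spec F, Spec.map inl m = hV.primeIdealOf ⟨x, hx⟩ := by
  obtain ⟨m, hm, -⟩ := Scheme.exists_preimage_of_isPullback h (hV.primeIdealOf ⟨x, hx⟩)
    (IsLocalRing.closedPoint (Y.residueField (f x))) <|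
      (congrArg f (hV.fromSpec_primeIdealOf ⟨x, hx⟩)).trans
        (Y.fromSpecResidueField_apply (f x) _).symm
  exact ⟨m, hm⟩

theorem exists_ringKrullDim_quotient_le_topologicalKrullDim {P : Scheme.{u}} {F : CommRingCat.{u}}
    (j : Spec F ⟶ P) [IsOpenImmersion j] {q : Ideal F} (hq : q ∈ minimalPrimes F) :
    ∃ C ∈ irreducibleComponents P, ringKrullDim (F ⧸ q) ≤ topologicalKrullDim C := by
  let p : Spec F := ⟨q, hq.1.1⟩
  have hmem : closure {j p} ∈ irreducibleComponents P :=
    closure_mem_irreducibleComponents_of_mem_minimalPrimes j.isOpenEmbedding hq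
  obtain ⟨ψ, hψ, -⟩ := exists_isOpenEmbedding_closure_singleton j.isOpenEmbedding p
  rw [← PrimeSpectrum.topologicalKrullDim_eq_ringKrullDim]
  exact ⟨_, hmem, hψ.isInducing.topologicalKrullDim_le⟩

end AffineFiber

section SmoothFibers

variable {k : Type u} [Field k] {X Y : Scheme.{u}}

theorem formallySmooth_stalkMap_of_smooth_fiber (f : X ⟶ Y) (sY : Y ⟶ Spec (CommRingCat.of k))
    [Smooth sY] [LocallyOfFiniteType (f ≫ sY)] (x : X)
    [Smooth (pullback.snd f (Y.fromSpecResidueField (f x)))]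
    (hdim : ∀ C ∈ irreducibleComponents X,
      ∀ D ∈ irreducibleComponents ↥(pullback f (Y.fromSpecResidueField (f x))),
        topologicalKrullDim D + topologicalKrullDim Y ≤ topologicalKrullDim C) :
    (f.stalkMap x).hom.FormallySmooth := by
  obtain ⟨U, hU, hxU, d, φ, hφ, hφe⟩ := exists_etale_mvPolynomial_of_smooth sY (f x)
  obtain ⟨_, ⟨V, hV, rfl⟩, hxV, hVU⟩ :=
    X.isBasis_affineOpens.exists_subset_of_mem_open hxU (U.2.preimage f.continuous)
  have hV : IsAffineOpen V := hV
  have hVU : V ≤ f ⁻¹ᵁ U := hVU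
  rw [formallySmooth_stalkMap_iff U hU V hV hVU hxV]
  let κ := Y.residueField (f x)
  let _ := (f.appLE U V hVU).hom.toAlgebra
  let _ := (Y.evaluation U (f x) hxU).hom.toAlgebra
  let _ := (baseFieldHom sY U).toAlgebra
  let _ := (baseFieldHom (f ≫ sY) V).toAlgebra
  let _ := φ.toAlgebra
  let _ := Algebra.TensorProduct.rightAlgebra (R := Γ(Y, U)) (A := Γ(X, V)) (B := κ)
  have : IsScalarTower k (MvPolynomial (Fin d) k) Γ(Y, U) := .of_algebraMap_eq' hφ.symm
  have : IsScalarTower k Γ(Y, U) Γ(X, V) := .of_algebraMap_eq' (baseFieldHom_appLE f sY hVU).symm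
  have : Algebra.Etale (MvPolynomial (Fin d) k) Γ(Y, U) := hφe
  have : Algebra.FiniteType k Γ(X, V) := finiteType_baseFieldHom (f ≫ sY) hV
  have hpb := isPullback_SpecMap_evaluation f hU hV hVU hxU
    (CommRingCat.isPushout_tensorProduct Γ(Y, U) Γ(X, V) κ)
  obtain ⟨j, _, hj⟩ := exists_isOpenImmersion_fiber f hV hpb
  have : Algebra.Smooth κ (TensorProduct Γ(Y, U) Γ(X, V) κ) := by
    have : Smooth (j ≫ pullback.snd f (Y.fromSpecResidueField (f x))) := inferInstance
    rwa [hj, HasRingHomProperty.Spec_iff (P := @Smooth)] at this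
  obtain ⟨m, hm⟩ := exists_SpecMap_eq_primeIdealOf f hV hxV hpb
  have : m.asIdeal.IsPrime := m.isPrime
  rw [← hm]
  refine isSmoothAt_of_isSmoothAt_isPushout (k := k) (κ := κ) (d := d) m.asIdeal ?_
  intro q hq q' hq'
  obtain ⟨C, hC, hCq⟩ := exists_topologicalKrullDim_le_ringKrullDim_quotient (f ≫ sY) hV hq
  obtain ⟨D, hD, hDq⟩ := exists_ringKrullDim_quotient_le_topologicalKrullDim j hq'
  calc _ ≤ topologicalKrullDim D + topologicalKrullDim Y :=
        add_le_add hDq (natCast_le_topologicalKrullDim_of_etale hU hxU hφe)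
    _ ≤ topologicalKrullDim C := hdim C hC D hD
    _ ≤ _ := hCq

theorem fiberwise_smooth_implies_smooth_general (f : X ⟶ Y) (sY : Y ⟶ Spec (CommRingCat.of k))
    [Smooth sY] [LocallyOfFiniteType (f ≫ sY)]
    (hfib : ∀ y : Y, IsClosed ({y} : Set Y) →
      Smooth (pullback.snd f (Y.fromSpecResidueField y)) ∧
      ∀ C ∈ irreducibleComponents X,
        ∀ D ∈ irreducibleComponents ↥(pullback f (Y.fromSpecResidueField y)),
          topologicalKrullDim D + topologicalKrullDim Y ≤ topologicalKrullDim C) :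
    Smooth (f ≫ sY) ∧ Smooth f := by
  have : LocallyOfFiniteType f := locallyOfFiniteType_of_comp f sY
  have : IsLocallyNoetherian Y := LocallyOfFiniteType.isLocallyNoetherian sY
  have : JacobsonSpace X := LocallyOfFiniteType.jacobsonSpace (f ≫ sY)
  have : JacobsonSpace Y := LocallyOfFiniteType.jacobsonSpace sY
  have : LocallyOfFinitePresentation f := LocallyOfFinitePresentation.iff_locallyOfFiniteType.2 ‹_›
  suffices hf : Smooth f from ⟨inferInstance, hf⟩
  rw [← Scheme.Hom.smoothLocus_eq_top_iff]
  by_contra hne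
  have hcompl : (f.smoothLocus : Set X)ᶜ.Nonempty :=
    Set.nonempty_compl.2 fun h => hne (SetLike.coe_injective h)
  obtain ⟨x, hx, hxc⟩ :=
    nonempty_inter_closedPoints hcompl f.smoothLocus.2.isClosed_compl.isLocallyClosed
  obtain ⟨_, hdim⟩ := hfib (f x) (f.closePoints_subset_preimage_closedPoints hxc)
  exact hx (formallySmooth_stalkMap_of_smooth_fiber f sY x hdim)

end SmoothFibers

/-- Let `k` be a field and `f : X ⟶ Y` a morphism over `k` between separated
`k`-schemes of finite type.  If `X` is equidimensional, `Y` is irreducible and smooth over `k`,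
and every fiber of `f` over a closed point is smooth over the residue field and of pure
dimension `dim X - dim Y`, then `X` is smooth over `k` and `f` is a smooth morphism. -/
theorem fiberwise_smooth_implies_smooth
    {k : Type u} [Field k]
    (X Y : Scheme.{u}) (f : X ⟶ Y)
    (sX : X ⟶ Spec (CommRingCat.of k)) (sY : Y ⟶ Spec (CommRingCat.of k))
    (hcomm : f ≫ sY = sX)
    (hXsep : IsSeparated sX) (hXlft : LocallyOfFiniteType sX) (hXqc : QuasiCompact sX)
    (hYsep : IsSeparated sY) (hYlft : LocallyOfFiniteType sY) (hYqc : QuasiCompact sY)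
    -- (i) `X` is equidimensional
    (hXeq : ∀ C ∈ irreducibleComponents X, topologicalKrullDim C = topologicalKrullDim X)
    -- (ii) `Y` is irreducible
    (hYirr : IrreducibleSpace Y)
    -- (iii) `Y` is smooth over `k`
    (hYsm : IsSmooth sY)
    -- (iv) every fiber over a closed point is smooth over the residue field, of pure
    -- dimension `dim X - dim Y`
    (hfib : ∀ y : Y, IsClosed ({y} : Set Y) →
      IsSmooth (pullback.snd f (Y.fromSpecResidueField y)) ∧
      ∀ C ∈ irreducibleComponents ((pullback f (Y.fromSpecResidueField y) : Scheme.{u}) : Type u),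
        topologicalKrullDim C + topologicalKrullDim Y = topologicalKrullDim X) :
    IsSmooth sX ∧ IsSmooth f := by
  subst hcomm
  have : Smooth sY := hYsm
  exact fiberwise_smooth_implies_smooth_general f sY fun y hy =>
    ⟨(hfib y hy).1, fun C hC D hD => ((hfib y hy).2 D hD).trans_le (hXeq C hC).ge⟩
end

section
/- Let K be an algebraically closed field equipped with a norm (a normed field). Let W be an ℕ²-bigraded K-vector space with an endomorphism F compatible with the grading. Suppose: (i) W_{0,i} = 0 for all i; (ii) W_{•,0} := ⊕_n W_{n,0} is finite-dimensional; (iii) there are positive real constants E, d, b with E ≥ 1 such that |F, W_{n,i}| ≤ E·dⁿ·bⁱ for all (n,i); (iv) D > 1 is a real constant with |F, W_{•,0}| ≤ D. Let Sym(W) be the quotient of the tensor algebra T(W) by the two-sided ideal generated by the elements x⊗y − y⊗x for bihomogeneous x, y ∈ W; this ideal is bihomogeneous, so Sym(W) inherits the ℕ²-bigrading and the induced endomorphism F. Then there exists a real constant C′ (depending on W, F, E, d, b, D but not on n, i) such that |F, Sym(W)_{n,i}| ≤ C′·(n+1)·(i+1)·(max(2Ed, D))ⁿ·(2b)ⁱ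 for all (n,i) ∈ ℕ×ℕ. -/
open scoped TensorProduct DirectSum

/-- The `L¹`-trace of an endomorphism of a `K`-vector space: the sum over the eigenvalues `μ`
of `dim (generalized eigenspace of μ) · ‖μ‖`. -/
noncomputable def L1Trace (K : Type*) [NormedField K] {V : Type*} [AddCommGroup V]
    [Module K V] (F : V →ₗ[K] V) : ℝ :=
  ∑ᶠ μ : K, (Module.finrank K ↥(Module.End.maxGenEigenspace F μ) : ℝ) * ‖μ‖

variable (K : Type) [NormedField K] (W : ℕ × ℕ → Type)
  [∀ p, AddCommGroup (W p)] [∀ p, Module K (W p)]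

/-- The iterated tensor product `W p₁ ⊗ (W p₂ ⊗ (⋯ ⊗ K))` indexed by a list of bidegrees. -/
noncomputable def listTensor : List (ℕ × ℕ) → ModuleCat K
  | [] => ModuleCat.of K K
  | p :: l => ModuleCat.of K (W p ⊗[K] (listTensor l))

/-- The endomorphism `F ⊗ ⋯ ⊗ F` of the iterated tensor product. -/
noncomputable def listEnd (F : ∀ p, W p →ₗ[K] W p) :
    (l : List (ℕ × ℕ)) → (listTensor K W l : Type) →ₗ[K] (listTensor K W l : Type)
  | [] => LinearMap.id
  | p :: l => TensorProduct.map (F p) (listEnd F l)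

/-- Lists of bidegrees with prescribed total bidegree `(n, i)`. -/
abbrev GradedList (n i : ℕ) : Type :=
  {l : List (ℕ × ℕ) // (l.map Prod.fst).sum = n ∧ (l.map Prod.snd).sum = i}

/-- The `(n,i)`-th bigraded piece of the tensor algebra `T(W)` of an `ℕ²`-bigraded vector
space: the direct sum, over all tuples of bidegrees summing to `(n,i)`, of the corresponding
iterated tensor products. -/
noncomputable abbrev TensorAlgPiece (n i : ℕ) : Type :=
  Π₀ l : GradedList n i, (listTensor K W l.1 : Type)

/-- The endomorphism of `T(W)_{n,i}` induced by `F`, acting as `F ⊗ ⋯ ⊗ F` on each summand. -/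
noncomputable def tensorAlgEnd (F : ∀ p, W p →ₗ[K] W p) (n i : ℕ) :
    TensorAlgPiece K W n i →ₗ[K] TensorAlgPiece K W n i :=
  DFinsupp.mapRange.linearMap fun l => listEnd K W F l.1

/-- Swap the entries in positions `j` and `j + 1` of a list. -/
def swapAdj {α : Type*} : ℕ → List α → List α
  | 0, a :: b :: t => b :: a :: t
  | n + 1, a :: t => a :: swapAdj n t
  | _, l => l

theorem swapAdj_map_sum {α β : Type*} [AddCommMonoid β] (f : α → β) :
    ∀ (j : ℕ) (l : List α), ((swapAdj j l).map f).sum = (l.map f).sum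
  | 0, [] => rfl
  | 0, [a] => rfl
  | 0, a :: b :: t => by simp [swapAdj, add_left_comm]
  | n + 1, [] => rfl
  | n + 1, a :: t => by simp [swapAdj, swapAdj_map_sum f n t]

/-- The braiding isomorphism of the iterated tensor product exchanging the tensor factors in
positions `j` and `j + 1`. -/
noncomputable def swapMap :
    (j : ℕ) → (l : List (ℕ × ℕ)) →
      (listTensor K W l : Type) →ₗ[K] (listTensor K W (swapAdj j l) : Type)
  | 0, a :: b :: t => (TensorProduct.leftComm K (W a) (W b) (listTensor K W t)).toLinearMap
  | n + 1, a :: t => TensorProduct.map LinearMap.id (swapMap n t)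
  | 0, [] => LinearMap.id
  | 0, [_] => LinearMap.id
  | _ + 1, [] => LinearMap.id

/-- `swapAdj` preserves the total bidegree of a graded list. -/
def swapGraded (n i : ℕ) (j : ℕ) (l : GradedList n i) : GradedList n i :=
  ⟨swapAdj j l.1,
    (swapAdj_map_sum Prod.fst j l.1).trans l.2.1,
    (swapAdj_map_sum Prod.snd j l.1).trans l.2.2⟩

/-- The `(n,i)`-th bigraded piece of the two-sided ideal of `T(W)` generated by the elements
`x ⊗ y − y ⊗ x` for bihomogeneous `x, y ∈ W`: it is spanned by the differences between a
summand of `T(W)_{n,i}` and its image under an adjacent braiding. -/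
noncomputable def symRelations (n i : ℕ) : Submodule K (TensorAlgPiece K W n i) :=
  Submodule.span K
    {z | ∃ (j : ℕ) (l : GradedList n i) (v : (listTensor K W l.1 : Type)),
      z = DFinsupp.single (swapGraded n i j l) (swapMap K W j l.1 v) - DFinsupp.single l v}

/-!
The `L¹`-trace is multiplicative on tensor products, and it is subadditive: if the images of
equivariant maps `U x → V` span `V`, then `|f, V| ≤ ∑ |g x, U x|`, because generalized eigenvectors
map to generalized eigenvectors. In `Sym(W)` the tensor factors commute, so `Sym(W)_{n,i}` is
spanned by the images of those `W p₁ ⊗ ⋯ ⊗ W p_r` in which the factors of second degree `0` come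
last. By (i) all first degrees are positive, so such a tuple of bidegrees amounts to a composition
of `n` into `r` parts and a composition of `i` into at most `r` parts: there are at most `2ⁿ 2ⁱ` of
them. Each contributes at most `Eʳ dⁿ bⁱ ≤ Eⁿ dⁿ bⁱ`, since `r ≤ n`.
-/

section GeneralizedEigenspace

open Module Module.End

variable {R : Type*} [CommRing R] {M : Type*} [AddCommGroup M] [Module R M]
  {M' : Type*} [AddCommGroup M'] [Module R M']

theorem maxGenEigenspace_eq_bot_of_not_hasEigenvalue {f : End R M} {c : R}
    (hc : ¬ f.HasEigenvalue c) : f.maxGenEigenspace c = ⊥ := by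
  by_contra h
  exact hc (HasUnifEigenvalue.lt zero_lt_one h)

theorem maxGenEigenspace_eq_span_of_span_eq_top [IsDomain R] [IsTorsionFree R M] {ι : Type*}
    {f : End R M} {v : ι → M} {a : ι → R} (hv : ∀ i, v i ∈ f.maxGenEigenspace (a i))
    (hspan : Submodule.span R (Set.range v) = ⊤) (c : R) :
    f.maxGenEigenspace c = Submodule.span R (v '' {i | a i = c}) := by
  have span_le : (fun c => Submodule.span R (v '' {i | a i = c})) ≤ f.maxGenEigenspace := by
    intro c
    rw [Submodule.span_le]
    rintro _ ⟨i, rfl, rfl⟩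
    exact hv i
  have iSup_span : ⨆ c, Submodule.span R (v '' {i | a i = c}) = ⊤ := by
    rw [← Submodule.span_iUnion, ← Set.image_iUnion, ← hspan, ← Set.image_univ]
    congr 2
    ext i
    simp
  exact (congrFun ((f.independent_maxGenEigenspace.le_iff_eq_of_iSup_eq_top iSup_span).1
    span_le) c).symm

theorem map_mem_maxGenEigenspace_of_comp_eq {f : End R M} {g : End R M'} {φ : M' →ₗ[R] M}
    (hφ : f ∘ₗ φ = φ ∘ₗ g) {c : R} {x : M'} (hx : x ∈ g.maxGenEigenspace c) :
    φ x ∈ f.maxGenEigenspace c := by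
  obtain ⟨k, hk⟩ := (mem_maxGenEigenspace _ _ _).1 hx
  have comm : (f - c • 1) ∘ₗ φ = φ ∘ₗ (g - c • 1) := by
    ext y
    simpa using LinearMap.congr_fun hφ y
  refine (mem_maxGenEigenspace _ _ _).2 ⟨k, ?_⟩
  have := LinearMap.congr_fun (commute_pow_left_of_commute comm k) x
  rwa [LinearMap.comp_apply, LinearMap.comp_apply, hk, map_zero] at this

theorem tmul_mem_maxGenEigenspace {f : End R M} {g : End R M'} {a b : R} {x : M} {y : M'}
    (hx : x ∈ f.maxGenEigenspace a) (hy : y ∈ g.maxGenEigenspace b) :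
    x ⊗ₜ[R] y ∈ maxGenEigenspace (TensorProduct.map f g) (a * b) := by
  obtain ⟨k, hk⟩ := (mem_maxGenEigenspace _ _ _).1 hx
  obtain ⟨l, hl⟩ := (mem_maxGenEigenspace _ _ _).1 hy
  -- `f ⊗ g = (f - a) ⊗ g + a ⊗ g`, where the summands commute
  let p : End R (M ⊗[R] M') := TensorProduct.map (f - a • 1) g
  let q : End R (M ⊗[R] M') := TensorProduct.map (a • 1) g
  have map_eq : TensorProduct.map f g = p + q := by
    rw [← TensorProduct.map_add_left, sub_add_cancel]
  have comm : Commute p q := by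
    rw [commute_iff_eq, ← TensorProduct.map_mul, ← TensorProduct.map_mul]
    simp
  have mem_p : x ⊗ₜ y ∈ p.maxGenEigenspace 0 :=
    (mem_maxGenEigenspace _ _ _).2 ⟨k, by simp [p, TensorProduct.map_pow, hk]⟩
  have sub_eq : q - (a * b) • 1 = TensorProduct.map (a • 1) (g - b • 1) := by
    ext
    simp [q, TensorProduct.tmul_sub, mul_smul, ← TensorProduct.smul_tmul', smul_comm a b]
  have mem_q : x ⊗ₜ y ∈ q.maxGenEigenspace (a * b) :=
    (mem_maxGenEigenspace _ _ _).2 ⟨l, by rw [sub_eq, TensorProduct.map_pow]; simp [hl]⟩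
  have mem_add := genEigenspace_inf_le_add p q 0 (a * b) ⊤ ⊤ comm ⟨mem_p, mem_q⟩
  rwa [zero_add, top_add, ← map_eq] at mem_add

end GeneralizedEigenspace

section L1Trace

open Module Module.End

universe u

variable {𝕜 : Type u} [NormedField 𝕜] {V : Type*} [AddCommGroup V] [Module 𝕜 V]
  {V' : Type*} [AddCommGroup V'] [Module 𝕜 V'] {ι : Type*}

theorem L1Trace_nonneg (f : End 𝕜 V) : 0 ≤ L1Trace 𝕜 f :=
  finsum_nonneg fun _ => by positivity

theorem L1Trace_id : L1Trace 𝕜 (LinearMap.id : End 𝕜 V) = finrank 𝕜 V := by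
  have maxGenEigenspace_one : maxGenEigenspace (LinearMap.id : End 𝕜 V) 1 = ⊤ :=
    eq_top_iff.2 fun x _ => (mem_maxGenEigenspace _ _ _).2 ⟨1, by simp⟩
  rw [L1Trace, finsum_eq_single _ 1, maxGenEigenspace_one, finrank_top, norm_one, mul_one]
  intro c hc
  have not_hasEigenvalue : ¬ HasEigenvalue (LinearMap.id : End 𝕜 V) c := fun h => by
    obtain ⟨x, hx⟩ := h.exists_hasEigenvector
    have : (1 - c) • x = 0 := by rw [sub_smul, one_smul, ← hx.apply_eq_smul]; simp
    exact (smul_eq_zero.1 this).elim (sub_ne_zero.2 hc.symm) hx.2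
  rw [maxGenEigenspace_eq_bot_of_not_hasEigenvalue not_hasEigenvalue, finrank_bot, Nat.cast_zero,
    zero_mul]

theorem L1Trace_eq_sum_eigenvalues [FiniteDimensional 𝕜 V] (f : End 𝕜 V) :
    L1Trace 𝕜 f = ∑ c : f.Eigenvalues, (finrank 𝕜 (f.maxGenEigenspace c) : ℝ) * ‖(c : 𝕜)‖ := by
  have support_le : (Function.support fun c : 𝕜 => (finrank 𝕜 (f.maxGenEigenspace c) : ℝ) * ‖c‖) ⊆
      {c | f.HasEigenvalue c} :=
    Function.support_subset_iff'.2 fun c hc => by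
      rw [maxGenEigenspace_eq_bot_of_not_hasEigenvalue hc, finrank_bot, Nat.cast_zero, zero_mul]
  rw [L1Trace, ← Set.indicator_eq_self.2 support_le, ← finsum_mem_def,
    ← finsum_set_coe_eq_finsum_mem]
  exact finsum_eq_sum_of_fintype (α := f.Eigenvalues) _

theorem exists_basis_sum_norm_eq_L1Trace [IsAlgClosed 𝕜] [FiniteDimensional 𝕜 V]
    (f : End 𝕜 V) :
    ∃ (ι : Type u) (_ : Fintype ι) (v : Basis ι 𝕜 V) (a : ι → 𝕜),
      (∀ i, v i ∈ f.maxGenEigenspace (a i)) ∧ ∑ i, ‖a i‖ = L1Trace 𝕜 f := by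
  classical
  have indep : iSupIndep fun c : f.Eigenvalues => f.maxGenEigenspace c :=
    f.independent_maxGenEigenspace.comp Subtype.val_injective
  have iSup_eq_top : ⨆ c : f.Eigenvalues, f.maxGenEigenspace c = ⊤ := by
    rw [eq_top_iff, ← iSup_maxGenEigenspace_eq_top f]
    refine iSup_le fun c => ?_
    by_cases hc : f.HasEigenvalue c
    · exact le_iSup (fun c : f.Eigenvalues => f.maxGenEigenspace c) ⟨c, hc⟩
    · exact (maxGenEigenspace_eq_bot_of_not_hasEigenvalue hc).trans_le bot_le
  have internal := DirectSum.isInternal_submodule_of_iSupIndep_of_iSup_eq_top indep iSup_eq_top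
  refine ⟨Σ c : f.Eigenvalues, Fin (finrank 𝕜 (f.maxGenEigenspace c)), inferInstance,
    internal.collectedBasis fun c => finBasis 𝕜 (f.maxGenEigenspace c), fun i => i.1,
    fun i => internal.collectedBasis_mem _ i, ?_⟩
  simp [Fintype.sum_sigma, L1Trace_eq_sum_eigenvalues]

theorem L1Trace_le_sum_norm_of_span_eq_top [Fintype ι] {f : End 𝕜 V} {v : ι → V} {a : ι → 𝕜}
    (hv : ∀ i, v i ∈ f.maxGenEigenspace (a i)) (hspan : Submodule.span 𝕜 (Set.range v) = ⊤) :
    L1Trace 𝕜 f ≤ ∑ i, ‖a i‖ := by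
  classical
  have finrank_le (c : 𝕜) :
      finrank 𝕜 (f.maxGenEigenspace c) ≤ (Finset.univ.filter (a · = c)).card := by
    have : f.maxGenEigenspace c =
        Submodule.span 𝕜 ((Finset.univ.filter (a · = c)).image v : Set V) := by
      simpa using maxGenEigenspace_eq_span_of_span_eq_top hv hspan c
    rw [this]
    exact (finrank_span_finset_le_card _).trans Finset.card_image_le
  have support_le :
      (Function.support fun c : 𝕜 => (finrank 𝕜 (f.maxGenEigenspace c) : ℝ) * ‖c‖) ⊆
        Finset.univ.image a :=
    Function.support_subset_iff'.2 fun c hc => by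
      have filter_eq_empty : Finset.univ.filter (a · = c) = ∅ := by simpa using hc
      have finrank_eq_zero := Nat.le_zero.1 ((finrank_le c).trans_eq (by rw [filter_eq_empty]; rfl))
      rw [finrank_eq_zero, Nat.cast_zero, zero_mul]
  calc L1Trace 𝕜 f
      = ∑ c ∈ Finset.univ.image a, (finrank 𝕜 (f.maxGenEigenspace c) : ℝ) * ‖c‖ :=
        finsum_eq_sum_of_support_subset _ support_le
    _ ≤ ∑ c ∈ Finset.univ.image a, ((Finset.univ.filter (a · = c)).card : ℝ) * ‖c‖ := by
        gcongr with c
        exact finrank_le c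
    _ = ∑ i, ‖a i‖ := by
        simp [Finset.sum_comp norm a]

theorem L1Trace_le_sum_of_iSup_range_eq_top [IsAlgClosed 𝕜] [Fintype ι] {U : ι → Type*}
    [∀ x, AddCommGroup (U x)] [∀ x, Module 𝕜 (U x)] [∀ x, FiniteDimensional 𝕜 (U x)]
    {f : End 𝕜 V} {g : ∀ x, End 𝕜 (U x)} (π : ∀ x, U x →ₗ[𝕜] V)
    (hπ : ∀ x, f ∘ₗ π x = π x ∘ₗ g x) (htop : ⨆ x, LinearMap.range (π x) = ⊤) :
    L1Trace 𝕜 f ≤ ∑ x, L1Trace 𝕜 (g x) := by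
  choose κ _ v a hv ha using fun x => exists_basis_sum_norm_eq_L1Trace (g x)
  have span_eq_top : Submodule.span 𝕜 (Set.range fun i : Σ x, κ x => π i.1 (v i.1 i.2)) = ⊤ := by
    rw [Set.range_sigma_eq_iUnion_range, Submodule.span_iUnion, ← htop]
    congr! with x
    rw [Set.range_comp' (π x) (v x), Submodule.span_image, (v x).span_eq, Submodule.map_top]
  calc L1Trace 𝕜 f
      ≤ ∑ i : Σ x, κ x, ‖a i.1 i.2‖ :=
        L1Trace_le_sum_norm_of_span_eq_top
          (fun i => map_mem_maxGenEigenspace_of_comp_eq (hπ i.1) (hv i.1 i.2)) span_eq_top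
    _ = ∑ x, L1Trace 𝕜 (g x) := by simp only [Fintype.sum_sigma, ha]

theorem L1Trace_tensorProductMap_le [IsAlgClosed 𝕜] [FiniteDimensional 𝕜 V]
    [FiniteDimensional 𝕜 V'] (f : End 𝕜 V) (g : End 𝕜 V') :
    L1Trace 𝕜 (TensorProduct.map f g) ≤ L1Trace 𝕜 f * L1Trace 𝕜 g := by
  obtain ⟨ι, _, v, a, hv, ha⟩ := exists_basis_sum_norm_eq_L1Trace f
  obtain ⟨κ, _, w, b, hw, hb⟩ := exists_basis_sum_norm_eq_L1Trace g
  calc L1Trace 𝕜 (TensorProduct.map f g)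
      ≤ ∑ i : ι × κ, ‖a i.1 * b i.2‖ :=
        L1Trace_le_sum_norm_of_span_eq_top (v := v.tensorProduct w)
          (fun i => by
            rw [Basis.tensorProduct_apply']
            exact tmul_mem_maxGenEigenspace (hv i.1) (hw i.2))
          (v.tensorProduct w).span_eq
    _ = L1Trace 𝕜 f * L1Trace 𝕜 g := by
        simp [← ha, ← hb, Fintype.sum_prod_type, Finset.sum_mul_sum]

end L1Trace

section Combinatorics

theorem reflTransGen_swapAdj_of_perm {α : Type*} {l l' : List α} (h : l.Perm l') :
    Relation.ReflTransGen (fun l l' => ∃ j, swapAdj j l = l') l l' := by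
  induction h with
  | nil => exact .refl
  | cons a _ ih => exact ih.lift (a :: ·) fun _ _ ⟨j, hj⟩ => ⟨j + 1, congrArg (a :: ·) hj⟩
  | swap a b l => exact .single ⟨0, rfl⟩
  | trans _ _ ih ih' => exact ih.trans ih'

/-- Pairs of a composition of `n` and a composition of `i` that is at most as long. They index the
tuples of bidegrees of total bidegree `(n, i)` in which all first degrees are positive and the
vanishing second degrees come last. -/
abbrev CompositionPair (n i : ℕ) : Type :=
  {x : Composition n × Composition i // x.2.length ≤ x.1.length}

/-- The tuple of bidegrees indexed by a pair of compositions: the blocks of the second one, padded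
with zeros on the right, are the second degrees. -/
def CompositionPair.toGradedList {n i : ℕ} (x : CompositionPair n i) : GradedList n i :=
  have length_eq : x.1.1.blocks.length = (x.1.2.blocks.rightpad x.1.1.length 0).length := by
    rw [List.length_rightpad]
    exact (max_eq_left x.2).symm
  ⟨x.1.1.blocks.zip (x.1.2.blocks.rightpad x.1.1.length 0), by
    rw [List.map_fst_zip length_eq.le, Composition.blocks_sum], by
    rw [List.map_snd_zip length_eq.ge]
    simp [List.rightpad, Composition.blocks_sum]⟩

theorem CompositionPair.length_toGradedList {n i : ℕ} (x : CompositionPair n i) :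
    x.toGradedList.1.length = x.1.1.length := by
  simp [toGradedList, le_add_tsub]

theorem card_compositionPair_le (n i : ℕ) :
    Fintype.card (CompositionPair n i) ≤ 2 ^ n * 2 ^ i :=
  calc Fintype.card (CompositionPair n i)
      ≤ Fintype.card (Composition n × Composition i) := Fintype.card_subtype_le _
    _ = 2 ^ (n - 1) * 2 ^ (i - 1) := by
        rw [Fintype.card_prod, composition_card, composition_card]
    _ ≤ 2 ^ n * 2 ^ i := by gcongr <;> omega

theorem exists_perm_toGradedList {n i : ℕ} (l : GradedList n i) (hl : ∀ p ∈ l.1, p.1 ≠ 0) :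
    ∃ x : CompositionPair n i, x.toGradedList.1.Perm l.1 := by
  let u := l.1.filter (·.2 ≠ 0)
  let z := l.1.filter (¬ ·.2 ≠ 0)
  have perm : (u ++ z).Perm l.1 := by simpa [u, z] using List.filter_append_perm (·.2 ≠ 0) l.1
  have snd_z : z.map Prod.snd = List.replicate z.length 0 := by
    refine List.eq_replicate_iff.2 ⟨List.length_map _, ?_⟩
    simp [z]
  let c : Composition n :=
    { blocks := (u ++ z).map Prod.fst
      blocks_pos := by
        intro k hk
        obtain ⟨p, hp, rfl⟩ := List.mem_map.1 hk
        exact Nat.pos_of_ne_zero (hl p (perm.subset hp))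
      blocks_sum := (perm.map _).sum_eq.trans l.2.1 }
  let c' : Composition i :=
    { blocks := u.map Prod.snd
      blocks_pos := by
        intro k hk
        obtain ⟨p, hp, rfl⟩ := List.mem_map.1 hk
        exact Nat.pos_of_ne_zero (by simpa using List.of_mem_filter hp)
      blocks_sum := by
        rw [← l.2.2, ← (perm.map Prod.snd).sum_eq, List.map_append, snd_z]
        simp }
  have length_le : c'.length ≤ c.length := by simp [Composition.length, c, c']
  refine ⟨⟨(c, c'), length_le⟩, ?_⟩
  have rightpad_eq : c'.blocks.rightpad c.length 0 = (u ++ z).map Prod.snd := by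
    simp [List.rightpad, c, c', Composition.length, snd_z]
  rw [CompositionPair.toGradedList]
  simp only [rightpad_eq]
  rwa [List.zip_map', List.map_id']

theorem prod_map_le_mul_pow {t : ℕ × ℕ → ℝ} (ht : ∀ p, 0 ≤ t p) {E d b : ℝ} (hE : 0 ≤ E)
    (hd : 0 ≤ d) (hb : 0 ≤ b) (hbound : ∀ p, t p ≤ E * d ^ p.1 * b ^ p.2) (l : List (ℕ × ℕ)) :
    (l.map t).prod ≤ E ^ l.length * d ^ (l.map Prod.fst).sum * b ^ (l.map Prod.snd).sum := by
  induction l with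
  | nil => simp
  | cons p l ih =>
    have prod_nonneg : 0 ≤ (l.map t).prod :=
      List.prod_nonneg (List.forall_mem_map.2 fun p _ => ht p)
    calc ((p :: l).map t).prod
        = t p * (l.map t).prod := by simp
      _ ≤ (E * d ^ p.1 * b ^ p.2) *
            (E ^ l.length * d ^ (l.map Prod.fst).sum * b ^ (l.map Prod.snd).sum) :=
          mul_le_mul (hbound p) ih prod_nonneg (by positivity)
      _ = _ := by
          simp only [List.length_cons, List.map_cons, List.sum_cons]
          ring

theorem sum_prod_toGradedList_le {t : ℕ × ℕ → ℝ} (ht : ∀ p, 0 ≤ t p) {E d b : ℝ} (hE : 1 ≤ E)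
    (hd : 0 ≤ d) (hb : 0 ≤ b) (hbound : ∀ p, t p ≤ E * d ^ p.1 * b ^ p.2) (n i : ℕ) :
    ∑ x : CompositionPair n i, (x.toGradedList.1.map t).prod ≤ (2 * E * d) ^ n * (2 * b) ^ i := by
  have prod_le (x : CompositionPair n i) :
      (x.toGradedList.1.map t).prod ≤ E ^ n * d ^ n * b ^ i := by
    have length_le : x.toGradedList.1.length ≤ n :=
      x.length_toGradedList.trans_le x.1.1.length_le
    have := prod_map_le_mul_pow ht (zero_le_one.trans hE) hd hb hbound x.toGradedList.1
    rw [x.toGradedList.2.1, x.toGradedList.2.2] at this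
    exact this.trans (by gcongr)
  calc ∑ x : CompositionPair n i, (x.toGradedList.1.map t).prod
      ≤ Fintype.card (CompositionPair n i) * (E ^ n * d ^ n * b ^ i) := by
        simpa using Finset.sum_le_card_nsmul Finset.univ _ _ fun x _ => prod_le x
    _ ≤ (2 ^ n * 2 ^ i) * (E ^ n * d ^ n * b ^ i) := by
        gcongr
        exact_mod_cast card_compositionPair_le n i
    _ = (2 * E * d) ^ n * (2 * b) ^ i := by ring

end Combinatorics

section SymmetricAlgebra

variable {K W} {n i : ℕ}

theorem finiteDimensional_listTensor [∀ p, FiniteDimensional K (W p)] :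
    ∀ l : List (ℕ × ℕ), FiniteDimensional K (listTensor K W l)
  | [] => inferInstanceAs (FiniteDimensional K K)
  | p :: l =>
    have := finiteDimensional_listTensor l
    inferInstanceAs (FiniteDimensional K (W p ⊗[K] listTensor K W l))

theorem subsingleton_listTensor_of_mem {p : ℕ × ℕ} [Subsingleton (W p)] :
    ∀ {l : List (ℕ × ℕ)}, p ∈ l → Subsingleton (listTensor K W l)
  | q :: l, h => by
    rcases List.mem_cons.1 h with rfl | h
    · exact inferInstanceAs (Subsingleton (W p ⊗[K] listTensor K W l))
    · have := subsingleton_listTensor_of_mem h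
      exact inferInstanceAs (Subsingleton (W q ⊗[K] listTensor K W l))

theorem L1Trace_listEnd_le [IsAlgClosed K] [∀ p, FiniteDimensional K (W p)]
    (F : ∀ p, W p →ₗ[K] W p) :
    ∀ l : List (ℕ × ℕ), L1Trace K (listEnd K W F l) ≤ (l.map fun p => L1Trace K (F p)).prod
  | [] => by
    rw [List.map_nil, List.prod_nil]
    have L1Trace_id_self : L1Trace K (LinearMap.id : K →ₗ[K] K) = 1 := by
      rw [L1Trace_id, Module.finrank_self, Nat.cast_one]
    exact L1Trace_id_self.le
  | p :: l => by
    have := finiteDimensional_listTensor (K := K) (W := W) l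
    rw [List.map_cons, List.prod_cons]
    exact (L1Trace_tensorProductMap_le (F p) (listEnd K W F l)).trans
      (mul_le_mul_of_nonneg_left (L1Trace_listEnd_le F l) (L1Trace_nonneg _))

variable (K W) in
/-- The multiplication map `W p₁ ⊗ ⋯ ⊗ W p_r → Sym(W)_{n,i}` for bidegrees `p₁, …, p_r` summing to
`(n, i)`. -/
noncomputable def symMk (l : GradedList n i) :
    listTensor K W l.1 →ₗ[K] TensorAlgPiece K W n i ⧸ symRelations K W n i :=
  (symRelations K W n i).mkQ ∘ₗ
    DFinsupp.lsingle (M := fun l : GradedList n i => listTensor K W l.1) l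

theorem comp_symMk {F : ∀ p, W p →ₗ[K] W p}
    {G : TensorAlgPiece K W n i ⧸ symRelations K W n i →ₗ[K]
      TensorAlgPiece K W n i ⧸ symRelations K W n i}
    (hG : ∀ x, G (Submodule.Quotient.mk x) = Submodule.Quotient.mk (tensorAlgEnd K W F n i x))
    (l : GradedList n i) : G ∘ₗ symMk K W l = symMk K W l ∘ₗ listEnd K W F l.1 := by
  ext x
  exact (hG _).trans (by simp [symMk, tensorAlgEnd, DFinsupp.mapRange_single])

theorem symMk_swapMap (j : ℕ) (l : GradedList n i) (x : listTensor K W l.1) :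
    symMk K W (swapGraded n i j l) (swapMap K W j l.1 x) = symMk K W l x :=
  (Submodule.Quotient.eq _).2 (Submodule.subset_span ⟨j, l, x, rfl⟩)

theorem range_symMk_le_of_perm {l l' : GradedList n i} (h : l.1.Perm l'.1) :
    LinearMap.range (symMk K W l) ≤ LinearMap.range (symMk K W l') := by
  have le_swap (j : ℕ) (l : GradedList n i) :
      LinearMap.range (symMk K W l) ≤ LinearMap.range (symMk K W (swapGraded n i j l)) := by
    rintro _ ⟨x, rfl⟩
    exact ⟨_, symMk_swapMap j l x⟩
  obtain ⟨l, hl⟩ := l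
  replace h := reflTransGen_swapAdj_of_perm h
  dsimp only at h
  induction h using Relation.ReflTransGen.head_induction_on with
  | refl => exact le_rfl
  | head swap _ ih =>
    obtain ⟨j, rfl⟩ := swap
    exact (le_swap j ⟨_, hl⟩).trans (ih _)

theorem iSup_range_symMk : ⨆ l : GradedList n i, LinearMap.range (symMk K W l) = ⊤ := by
  rw [eq_top_iff]
  rintro q -
  obtain ⟨z, rfl⟩ := Submodule.mkQ_surjective _ q
  classical
  induction z using DFinsupp.induction with
  | h0 => rw [map_zero]; exact Submodule.zero_mem _
  | ha l x z _ _ ih =>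
    rw [map_add]
    exact Submodule.add_mem _ (Submodule.mem_iSup_of_mem l ⟨x, rfl⟩) ih

theorem iSup_range_symMk_toGradedList (hW0 : ∀ i, Subsingleton (W (0, i))) :
    ⨆ x : CompositionPair n i, LinearMap.range (symMk K W x.toGradedList) = ⊤ := by
  rw [eq_top_iff, ← iSup_range_symMk]
  refine iSup_le fun l => ?_
  by_cases hl : ∀ p ∈ l.1, p.1 ≠ 0
  · obtain ⟨x, hx⟩ := exists_perm_toGradedList l hl
    exact le_iSup_of_le x (range_symMk_le_of_perm hx.symm)
  · push Not at hl
    obtain ⟨⟨_, k⟩, mem, rfl⟩ := hl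
    have := hW0 k
    have := subsingleton_listTensor_of_mem (K := K) (W := W) mem
    rw [Subsingleton.elim (symMk K W l) 0, LinearMap.range_zero]
    exact bot_le

end SymmetricAlgebra

theorem L1Trace_symmetricAlgebra_le_general {K : Type} [NormedField K] [IsAlgClosed K]
    (W : ℕ × ℕ → Type)
    [∀ p, AddCommGroup (W p)] [∀ p, Module K (W p)] [∀ p, FiniteDimensional K (W p)]
    (F : ∀ p, W p →ₗ[K] W p) (hW0 : ∀ i : ℕ, Subsingleton (W (0, i)))
    (E d b : ℝ) (hE : 1 ≤ E) (hd : 0 ≤ d) (hb : 0 ≤ b)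
    (hbound : ∀ p : ℕ × ℕ, L1Trace K (F p) ≤ E * d ^ p.1 * b ^ p.2) (n i : ℕ)
    (G : (TensorAlgPiece K W n i ⧸ symRelations K W n i) →ₗ[K]
      (TensorAlgPiece K W n i ⧸ symRelations K W n i))
    (hG : ∀ x : TensorAlgPiece K W n i,
      G (Submodule.Quotient.mk x) = Submodule.Quotient.mk (tensorAlgEnd K W F n i x)) :
    L1Trace K G ≤ (2 * E * d) ^ n * (2 * b) ^ i := by
  have := finiteDimensional_listTensor (K := K) (W := W)
  calc L1Trace K G
      ≤ ∑ x : CompositionPair n i, L1Trace K (listEnd K W F x.toGradedList.1) :=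
        L1Trace_le_sum_of_iSup_range_eq_top (fun x => symMk K W x.toGradedList)
          (fun x => comp_symMk hG x.toGradedList) (iSup_range_symMk_toGradedList hW0)
    _ ≤ ∑ x : CompositionPair n i, (x.toGradedList.1.map fun p => L1Trace K (F p)).prod :=
        Finset.sum_le_sum fun x _ => L1Trace_listEnd_le F x.toGradedList.1
    _ ≤ (2 * E * d) ^ n * (2 * b) ^ i :=
        sum_prod_toGradedList_le (fun p => L1Trace_nonneg (F p)) hE hd hb hbound n i

/-- Bound on the `L¹`-trace of the bigraded pieces of the free symmetric
algebra `Sym(W) = T(W)/(x⊗y − y⊗x)`: under the stated hypotheses there is a constant `C′`,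
independent of `(n, i)`, such that every endomorphism `G` of `Sym(W)_{n,i}` induced by `F`
(i.e. compatible with the quotient map) satisfies
`|F, Sym(W)_{n,i}| ≤ C′·(n+1)·(i+1)·(max (2Ed) D)ⁿ·(2b)ⁱ`. -/
theorem L1Trace_symmetricAlgebra_le {K : Type} [NormedField K] [IsAlgClosed K]
    (W : ℕ × ℕ → Type)
    [∀ p, AddCommGroup (W p)] [∀ p, Module K (W p)] [∀ p, FiniteDimensional K (W p)]
    (F : ∀ p, W p →ₗ[K] W p)
    -- (i) `W_{0,i} = 0` for all `i`
    (hW0 : ∀ i : ℕ, Subsingleton (W (0, i)))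
    -- (ii) `W_{•,0} = ⊕_n W_{n,0}` is finite-dimensional
    (hrow : FiniteDimensional K (Π₀ n : ℕ, W (n, 0)))
    -- (iii) the `L¹`-trace bounds on the pieces of `W`
    (E d b : ℝ) (hE : 1 ≤ E) (hd : 0 < d) (hb : 0 < b)
    (hbound : ∀ p : ℕ × ℕ, L1Trace K (F p) ≤ E * d ^ p.1 * b ^ p.2)
    -- (iv) `|F, W_{•,0}| ≤ D`
    (D : ℝ) (hD : 1 < D)
    (hrowbound : L1Trace K (DFinsupp.mapRange.linearMap fun n : ℕ => F (n, 0)) ≤ D) :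
    ∃ C' : ℝ, ∀ n i : ℕ,
      ∀ G : (TensorAlgPiece K W n i ⧸ symRelations K W n i) →ₗ[K]
            (TensorAlgPiece K W n i ⧸ symRelations K W n i),
        (∀ x : TensorAlgPiece K W n i,
          G (Submodule.Quotient.mk x) = Submodule.Quotient.mk (tensorAlgEnd K W F n i x)) →
        L1Trace K G ≤ C' * (n + 1) * (i + 1) * max (2 * E * d) D ^ n * (2 * b) ^ i := by
  refine ⟨1, fun n i G hG => ?_⟩
  calc L1Trace K G
      ≤ (2 * E * d) ^ n * (2 * b) ^ i :=
        L1Trace_symmetricAlgebra_le_general W F hW0 E d b hE hd.le hb.le hbound n i G hG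
    _ = 1 * (2 * E * d) ^ n * (2 * b) ^ i := by rw [one_mul]
    _ ≤ 1 * (n + 1) * (i + 1) * max (2 * E * d) D ^ n * (2 * b) ^ i := by
        gcongr
        · nlinarith [n.cast_nonneg (α := ℝ), i.cast_nonneg (α := ℝ)]
        · exact le_max_left _ _
end

section
/- Let q be a prime power. For each integer n ≥ 1 let a_n be the number of closed points of degree n on ℙ¹ over 𝔽_q, namely a_n = N_n + 1 if n = 1 and a_n = N_n if n ≥ 2, where N_n is the number of monic irreducible polynomials of degree n in 𝔽_q[X]. For real numbers t₁, t₂, t₃, t₄ ∈ [0,1) and n ≥ 1 define P_n(t₁,…,t₄) = 1 − 6q^{−2n} + 8q^{−3n} − 3q^{−4n} + ∑_{i=1}^{4} ∑_{d=1}^{∞} t_i^{nd}·(q^{−dn} − 2q^{−(d+1)n} + 2q^{−(d+3)n} − q^{−(d+4)n}) (each inner series converges absolutely). Then: (a) the infinite product Z(t₁,…,t₄) = ∏_{n≥1} P_n(t₁,…,t₄)^{a_n} converges for all (t₁,…,t₄) ∈ [0,1)⁴; (b) the infinite product C = ∏_{n≥1} ((1 − q^{−n})⁶·(1 + 6q^{−n}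 + q^{−2n}))^{a_n} converges; and (c) lim_{(t₁,…,t₄) → (1,1,1,1)} (1−t₁)(1−t₂)(1−t₃)(1−t₄)·Z(t₁,…,t₄) = (1 − q^{−1})^{−4}·C, the limit being taken over (t₁,…,t₄) ∈ [0,1)⁴ tending to (1,1,1,1). -/
open Filter Topology

/-- The number of monic irreducible polynomials of degree `n` in `F[X]`. -/
noncomputable def numMonicIrred (F : Type*) [Field F] (n : ℕ) : ℕ :=
  Nat.card {f : Polynomial F // f.Monic ∧ Irreducible f ∧ f.natDegree = n}

/-- The number `a_n` of closed points of degree `n` on `ℙ¹` over `F`:  the monic irreducible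
polynomials of degree `n`, plus one extra point (at infinity) in degree `1`. -/
noncomputable def numClosedPoints (F : Type*) [Field F] (n : ℕ) : ℕ :=
  if n = 1 then numMonicIrred F n + 1 else numMonicIrred F n

/-- The term of index `d` (for `d ≥ 1`, here reindexed by `d ∈ ℕ` via `d + 1`) of the inner
series of the Euler factor `P_n` in the variable `tᵢ`:
`tᵢ^{nd}·(q^{−dn} − 2q^{−(d+1)n} + 2q^{−(d+3)n} − q^{−(d+4)n})`. -/
noncomputable def innerTerm (q : ℕ) (n : ℕ) (ti : ℝ) (d : ℕ) : ℝ :=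
  ti ^ (n * (d + 1)) *
    (((q : ℝ)⁻¹) ^ ((d + 1) * n) - 2 * ((q : ℝ)⁻¹) ^ ((d + 2) * n)
      + 2 * ((q : ℝ)⁻¹) ^ ((d + 4) * n) - ((q : ℝ)⁻¹) ^ ((d + 5) * n))

/-- The Euler factor `P_n(t₁,…,t₄)` of the virtual height zeta function at a closed point of
degree `n`. -/
noncomputable def eulerFactor (q : ℕ) (n : ℕ) (t : Fin 4 → ℝ) : ℝ :=
  1 - 6 * ((q : ℝ)⁻¹) ^ (2 * n) + 8 * ((q : ℝ)⁻¹) ^ (3 * n) - 3 * ((q : ℝ)⁻¹) ^ (4 * n)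
    + ∑ i : Fin 4, ∑' d : ℕ, innerTerm q n (t i) d

/-- The Euler factor of the Tamagawa-type constant at a closed point of degree `n`:
`(1 − q^{−n})⁶·(1 + 6q^{−n} + q^{−2n})`. -/
noncomputable def tamagawaFactor (q : ℕ) (n : ℕ) : ℝ :=
  (1 - ((q : ℝ)⁻¹) ^ n) ^ 6 * (1 + 6 * ((q : ℝ)⁻¹) ^ n + ((q : ℝ)⁻¹) ^ (2 * n))

/-!
Counting the points of `ℙ¹` over the extension of degree `n` gives `∑_{d ∣ n} d * a_d = qⁿ + 1`,
hence `∏ₙ (1 - uⁿ)^(a_n) = (1 - q * u) * (1 - u)` for `|q * u| < 1`. At `u = tᵢ / q` this is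
`(1 - tᵢ) * (1 - tᵢ / q)`, so the four zeta functions `∏ₙ (1 - (tᵢ / q)ⁿ)^(-a_n)` carry the whole
pole of `Z` at `t = (1, 1, 1, 1)`. The factors left in `Z` once they are divided out are
`1 + O(q⁻²ⁿ)` uniformly for `|tᵢ| ≤ 1`, because the terms of order `q⁻ⁿ` cancel, while
`a_n = O(qⁿ)`. Their product therefore converges uniformly up to `t = (1, 1, 1, 1)`, where its
factors are the Tamagawa factors.
-/

section InfiniteProduct

variable {α ι R : Type*} [NormedCommRing R] [NormOneClass R]

theorem summable_exp_sub_one {b : ι → ℝ} (hb : Summable b) :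
    Summable fun i => Real.exp (b i) - 1 := by
  have h := Real.differentiableAt_exp.isBigO_sub (x₀ := 0) |>.comp_tendsto hb.tendsto_cofinite_zero
  simp only [Function.comp_def, Real.exp_zero, sub_zero] at h
  exact summable_of_isBigO hb h

theorem norm_pow_sub_one_le (z : R) (n : ℕ) : ‖z ^ n - 1‖ ≤ Real.exp (n * ‖z - 1‖) - 1 := by
  simpa using Finset.norm_prod_one_add_sub_one_le (Finset.range n) fun _ => z - 1

variable [CompleteSpace R]

theorem multipliable_pow_of_summable {f : ι → R} {a : ι → ℕ}
    (h : Summable fun i => a i * ‖f i - 1‖) : Multipliable fun i => f i ^ a i := by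
  have hsum : Summable fun i => ‖f i ^ a i - 1‖ :=
    (summable_exp_sub_one h).of_nonneg_of_le (fun _ => norm_nonneg _)
      fun i => norm_pow_sub_one_le (f i) (a i)
  simpa only [add_sub_cancel] using multipliable_one_add_of_summable hsum

theorem tendsto_tprod_pow_of_dominated_convergence {l : Filter α} {f : α → ι → R} {g : ι → R}
    {a : ι → ℕ} {b : ι → ℝ} (hb : Summable b) (hfg : ∀ i, Tendsto (f · i) l (𝓝 (g i)))
    (hbound : ∀ᶠ x in l, ∀ i, a i * ‖f x i - 1‖ ≤ b i) :
    Tendsto (fun x => ∏' i, f x i ^ a i) l (𝓝 (∏' i, g i ^ a i)) := by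
  have h := tendsto_tprod_one_add_of_dominated_convergence (summable_exp_sub_one hb)
    (fun i => ((hfg i).pow (a i)).sub_const 1) (hbound.mono fun x hx i =>
      (norm_pow_sub_one_le (f x i) (a i)).trans (by grw [hx i]))
  simpa only [add_sub_cancel] using h

end InfiniteProduct

section DynamicalZeta

theorem hasSum_pnat_pow_div_log {u : ℝ} (hu : |u| < 1) :
    HasSum (fun m : ℕ+ => u ^ (m : ℕ) / (m : ℕ)) (-Real.log (1 - u)) := by
  rw [hasSum_pnat_iff_hasSum_succ (f := fun m : ℕ => u ^ m / m)]
  exact_mod_cast Real.hasSum_pow_div_log_of_abs_lt_one hu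

theorem sum_divisorsAntidiagonal_mul_pow_div {K : Type*} [Semifield K] [CharZero K] (a : ℕ → ℕ)
    (u : K) (m : ℕ) :
    ∑ c ∈ m.divisorsAntidiagonal, (a c.1 : K) * ((u ^ c.1) ^ c.2 / c.2) =
      (∑ d ∈ m.divisors, d * a d : ℕ) * (u ^ m / m) := by
  push_cast
  rw [← Nat.sum_divisorsAntidiagonal fun d _ => (d : K) * a d, Finset.sum_mul]
  refine Finset.sum_congr rfl fun c hc => ?_
  obtain ⟨rfl, hne⟩ := Nat.mem_divisorsAntidiagonal.1 hc
  obtain ⟨h₁, h₂⟩ := mul_ne_zero_iff.1 hne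
  rw [← pow_mul]
  push_cast
  field_simp

theorem hasSum_mul_pow_div_of_hasSum_sum_divisors {a : ℕ → ℕ} {u s : ℝ}
    (hs : HasSum
      (fun m : ℕ+ => (∑ d ∈ (m : ℕ).divisors, d * a d : ℕ) * (u ^ (m : ℕ) / (m : ℕ))) s) :
    HasSum (fun c : ℕ+ × ℕ+ => (a c.1 : ℝ) * ((u ^ (c.1 : ℕ)) ^ (c.2 : ℕ) / (c.2 : ℕ))) s := by
  set f : ℕ+ × ℕ+ → ℝ := fun c => (a c.1 : ℝ) * ((u ^ (c.1 : ℕ)) ^ (c.2 : ℕ) / (c.2 : ℕ))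
  have fiber (m : ℕ+) : HasSum (fun c => f (sigmaAntidiagonalEquivProd ⟨m, c⟩))
      ((∑ d ∈ (m : ℕ).divisors, d * a d : ℕ) * (u ^ (m : ℕ) / (m : ℕ))) := by
    rw [← sum_divisorsAntidiagonal_mul_pow_div]
    exact Finset.hasSum _ fun c : ℕ × ℕ => (a c.1 : ℝ) * ((u ^ c.1) ^ c.2 / c.2)
  have fiber_abs (m : ℕ+) : HasSum (fun c => |f (sigmaAntidiagonalEquivProd ⟨m, c⟩)|)
      |(∑ d ∈ (m : ℕ).divisors, d * a d : ℕ) * (u ^ (m : ℕ) / (m : ℕ))| := by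
    simp only [f, abs_mul, abs_div, abs_pow, Nat.abs_cast]
    rw [← sum_divisorsAntidiagonal_mul_pow_div]
    exact Finset.hasSum _ fun c : ℕ × ℕ => (a c.1 : ℝ) * ((|u| ^ c.1) ^ c.2 / c.2)
  have summable : Summable (f ∘ sigmaAntidiagonalEquivProd) := by
    rw [← summable_abs_iff, summable_sigma_of_nonneg fun _ => abs_nonneg _]
    refine ⟨fun m => (fiber_abs m).summable, ?_⟩
    simpa only [Function.comp_apply, (fiber_abs _).tsum_eq] using hs.summable.abs
  rw [← sigmaAntidiagonalEquivProd.hasSum_iff]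
  exact (summable.hasSum.sigma fiber).unique hs ▸ summable.hasSum

-- If `a n` counts the closed points of degree `n` of a variety, the divisor sum counts its points
-- over the extension of degree `m`, and this is the Euler product of its zeta function.
theorem hasProd_one_sub_pow_pow_of_hasSum {a : ℕ → ℕ} {u s : ℝ} (hu : |u| < 1)
    (hs : HasSum
      (fun m : ℕ+ => (∑ d ∈ (m : ℕ).divisors, d * a d : ℕ) * (u ^ (m : ℕ) / (m : ℕ))) s) :
    HasProd (fun n : ℕ => (1 - u ^ (n + 1)) ^ a (n + 1)) (Real.exp (-s)) := by
  have hpow (n : ℕ+) : |u ^ (n : ℕ)| < 1 := by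
    rw [abs_pow]
    exact pow_lt_one₀ (abs_nonneg u) hu n.ne_zero
  have hlog : HasSum (fun n : ℕ+ => a n * -Real.log (1 - u ^ (n : ℕ))) s :=
    (hasSum_mul_pow_div_of_hasSum_sum_divisors hs).prod_fiberwise fun n =>
      (hasSum_pnat_pow_div_log (hpow n)).mul_left _
  rw [← hasProd_pnat_iff_hasProd_succ (f := fun n => (1 - u ^ n) ^ a n)]
  refine hlog.neg.rexp.congr_fun fun n => ?_
  have hpos : 0 < 1 - u ^ (n : ℕ) := sub_pos.2 (abs_lt.1 (hpow n)).2
  simp only [Function.comp_apply, mul_neg, neg_neg, Real.exp_nat_mul, Real.exp_log hpos]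

end DynamicalZeta

section ClosedPoints

open Polynomial UniqueFactorizationMonoid

variable (F : Type*) [Field F] [Finite F]

theorem sum_natDegree_normalizedFactors {K : Type*} [Field K] [DecidableEq K] (f : K[X]) :
    ((normalizedFactors f).map natDegree).sum = f.natDegree := by
  rcases eq_or_ne f 0 with rfl | hf
  · simp
  have monic_factors : ∀ p ∈ normalizedFactors f, p.Monic := fun p hp =>
    ((Polynomial.mem_normalizedFactors_iff hf).1 hp).2.1
  rw [← natDegree_multiset_prod_of_monic _ monic_factors,
    ← natDegree_C_mul (leadingCoeff_ne_zero.2 hf), leadingCoeff_mul_prod_normalizedFactors]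

theorem separable_X_pow_natCard_pow_sub_X {n : ℕ} (hn : n ≠ 0) :
    (X ^ Nat.card F ^ n - X : F[X]).Separable := by
  have := Fintype.ofFinite F
  obtain ⟨p, hp⟩ := CharP.exists F
  refine galois_poly_separable p _ (dvd_pow ?_ hn)
  rw [← CharP.cast_eq_zero_iff F p, Nat.card_eq_fintype_card, Nat.cast_card_eq_zero]

-- `X ^ qⁿ - X` is squarefree, and its irreducible factors are those of degree dividing `n`.
theorem sum_divisors_mul_numMonicIrred {n : ℕ} (hn : n ≠ 0) :
    ∑ d ∈ n.divisors, d * numMonicIrred F d = Nat.card F ^ n := by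
  classical
  let f : F[X] := X ^ Nat.card F ^ n - X
  have hf : f ≠ 0 := FiniteField.X_pow_card_pow_sub_X_ne_zero F hn Finite.one_lt_card
  let T : Finset F[X] := ⟨normalizedFactors f, (squarefree_iff_nodup_normalizedFactors hf).1
    (separable_X_pow_natCard_pow_sub_X F hn).squarefree⟩
  have mem_T (p : F[X]) : p ∈ T ↔ p.Monic ∧ Irreducible p ∧ p.natDegree ∣ n := by
    rw [Finset.mem_mk, Polynomial.mem_normalizedFactors_iff hf, and_left_comm]
    exact and_congr_right' (and_congr_right fun hp =>
      hp.natDegree_dvd_iff_dvd_X_pow_card_pow_sub_X.symm)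
  have card_fiber (d : ℕ) (hd : d ∣ n) : (T.filter (natDegree · = d)).card = numMonicIrred F d := by
    rw [numMonicIrred, ← Nat.card_eq_finsetCard]
    refine Nat.card_congr (Equiv.subtypeEquivRight fun p => ?_)
    rw [Finset.mem_filter, mem_T]
    grind
  calc ∑ d ∈ n.divisors, d * numMonicIrred F d
    _ = ∑ d ∈ n.divisors, ∑ p ∈ T with p.natDegree = d, p.natDegree := by
      refine Finset.sum_congr rfl fun d hd => ?_
      rw [← card_fiber d (Nat.dvd_of_mem_divisors hd), mul_comm]
      exact (Finset.sum_const_nat fun p hp => (Finset.mem_filter.1 hp).2).symm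
    _ = ∑ p ∈ T, p.natDegree := Finset.sum_fiberwise_of_maps_to
      (fun p hp => Nat.mem_divisors.2 ⟨((mem_T p).1 hp).2.2, hn⟩) _
    _ = f.natDegree := sum_natDegree_normalizedFactors f
    _ = Nat.card F ^ n := FiniteField.X_pow_card_pow_sub_X_natDegree_eq F hn Finite.one_lt_card

theorem sum_divisors_mul_numClosedPoints {n : ℕ} (hn : n ≠ 0) :
    ∑ d ∈ n.divisors, d * numClosedPoints F d = Nat.card F ^ n + 1 := by
  have (d : ℕ) : d * numClosedPoints F d = d * numMonicIrred F d + if d = 1 then 1 else 0 := by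
    unfold numClosedPoints
    split_ifs with h <;> simp [h]
  simp [this, Finset.sum_add_distrib, sum_divisors_mul_numMonicIrred F hn, hn]

theorem numClosedPoints_le {n : ℕ} (hn : n ≠ 0) : numClosedPoints F n ≤ 2 * Nat.card F ^ n :=
  calc numClosedPoints F n
    _ ≤ n * numClosedPoints F n := Nat.le_mul_of_pos_left _ (Nat.pos_of_ne_zero hn)
    _ ≤ ∑ d ∈ n.divisors, d * numClosedPoints F d :=
        Finset.single_le_sum (f := fun d => d * numClosedPoints F d)
          (fun _ _ => Nat.zero_le _) (Nat.mem_divisors_self n hn)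
    _ = Nat.card F ^ n + 1 := sum_divisors_mul_numClosedPoints F hn
    _ ≤ 2 * Nat.card F ^ n := by
        have : 0 < Nat.card F ^ n := pow_pos Nat.card_pos n
        lia

theorem hasProd_one_sub_pow_pow_numClosedPoints {u : ℝ} (hu : |Nat.card F * u| < 1) :
    HasProd (fun n : ℕ => (1 - u ^ (n + 1)) ^ numClosedPoints F (n + 1))
      ((1 - Nat.card F * u) * (1 - u)) := by
  have hu' : |u| < 1 := by
    have hq : (1 : ℝ) ≤ Nat.card F := by exact_mod_cast Nat.card_pos
    rw [abs_mul, Nat.abs_cast] at hu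
    exact (le_mul_of_one_le_left (abs_nonneg u) hq).trans_lt hu
  have hs := (hasSum_pnat_pow_div_log hu).add (hasSum_pnat_pow_div_log hu')
  have h := hasProd_one_sub_pow_pow_of_hasSum (a := numClosedPoints F) hu' <| hs.congr_fun
    fun m => by
      rw [sum_divisors_mul_numClosedPoints F m.ne_zero]
      push_cast
      ring
  rwa [neg_add_rev, neg_neg, neg_neg, Real.exp_add, mul_comm,
    Real.exp_log (sub_pos.2 (abs_lt.1 hu).2), Real.exp_log (sub_pos.2 (abs_lt.1 hu').2)] at h

end ClosedPoints

section EulerFactor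

/-- The Euler factor `P_n` multiplied by `∏ᵢ (1 - yᵢ)`, as a polynomial in `x = q⁻ⁿ` and
`yᵢ = (tᵢ / q)ⁿ`. -/
def clearedFactor (x : ℝ) (y : Fin 4 → ℝ) : ℝ :=
  (1 - 6 * x ^ 2 + 8 * x ^ 3 - 3 * x ^ 4) * ∏ i, (1 - y i) +
    (1 - 2 * x + 2 * x ^ 3 - x ^ 4) * ∑ i, y i * ∏ j, (1 - y (i.succAbove j))

/-- The factor of `Z(t)` in degree `n` that is left when the four zeta functions
`∏ₙ (1 - (tᵢ / q)ⁿ)^(-aₙ)` are divided out of the Euler product. -/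
noncomputable def regularizedFactor (q n : ℕ) (t : Fin 4 → ℝ) : ℝ :=
  clearedFactor ((q : ℝ)⁻¹ ^ n) fun i => (t i * (q : ℝ)⁻¹) ^ n

theorem continuous_regularizedFactor (q n : ℕ) : Continuous (regularizedFactor q n) := by
  unfold regularizedFactor clearedFactor
  fun_prop

theorem regularizedFactor_one (q n : ℕ) :
    regularizedFactor q n (fun _ => 1) = tamagawaFactor q n := by
  simp only [regularizedFactor, clearedFactor, tamagawaFactor, mul_comm 2 n, pow_mul, one_mul,
    Finset.prod_const, Finset.sum_const, Finset.card_univ, Fintype.card_fin, nsmul_eq_mul]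
  push_cast
  ring

-- The terms `∓ ∑ yᵢ` of `∏ (1 - yᵢ)` and `∑ yᵢ * ∏_{j ≠ i} (1 - yⱼ)` cancel. The symmetric
-- functions of `z` in the witness are the remaining terms of the sum of these two polynomials.
theorem exists_continuous_clearedFactor_sub_one_eq :
    ∃ h : ℝ × (Fin 4 → ℝ) → ℝ, Continuous h ∧
      ∀ x z, clearedFactor x (fun i => x * z i) - 1 = x ^ 2 * h (x, z) := by
  refine ⟨fun (x, z) => (-6 + 8 * x - 3 * x ^ 2) * ∏ i, (1 - x * z i) +
      (-2 + 2 * x ^ 2 - x ^ 3) * ∑ i, z i * ∏ j, (1 - x * z (i.succAbove j)) -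
      (z 0 * z 1 + z 0 * z 2 + z 0 * z 3 + z 1 * z 2 + z 1 * z 3 + z 2 * z 3) +
      2 * x * (z 0 * z 1 * z 2 + z 0 * z 1 * z 3 + z 0 * z 2 * z 3 + z 1 * z 2 * z 3) -
      3 * x ^ 2 * (z 0 * z 1 * z 2 * z 3), by fun_prop, fun x z => ?_⟩
  simp only [clearedFactor, Fin.prod_univ_four, Fin.isValue, Fin.succAbove, Nat.reduceAdd,
    Fin.prod_univ_three, Fin.castSucc_zero, Fin.succ_zero_eq_one, Fin.castSucc_one,
    Fin.succ_one_eq_two, Fin.reduceCastSucc, Fin.reduceSucc, Fin.sum_univ_four, lt_self_iff_false,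
    ↓reduceIte, not_lt_zero, zero_lt_one, Fin.lt_one_iff, Fin.reduceEq, Fin.reduceLT]
  ring

theorem exists_abs_clearedFactor_sub_one_le :
    ∃ C, ∀ (x : ℝ) (y : Fin 4 → ℝ), |x| ≤ 1 → (∀ i, |y i| ≤ |x|) →
      |clearedFactor x y - 1| ≤ C * x ^ 2 := by
  obtain ⟨h, h_cont, clearedFactor_eq⟩ := exists_continuous_clearedFactor_sub_one_eq
  obtain ⟨C, hC⟩ := (isCompact_closedBall (0 : ℝ × (Fin 4 → ℝ)) 1).exists_bound_of_continuousOn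
    h_cont.continuousOn
  refine ⟨C, fun x y hx hy => ?_⟩
  have y_eq : y = fun i => x * (y i / x) := by
    ext i
    refine (mul_div_cancel_of_imp' fun hx0 => ?_).symm
    simpa [hx0] using hy i
  have mem_ball : (x, fun i => y i / x) ∈ Metric.closedBall (0 : ℝ × (Fin 4 → ℝ)) 1 := by
    rw [mem_closedBall_zero_iff, Prod.norm_mk, sup_le_iff, pi_norm_le_iff_of_nonneg zero_le_one]
    refine ⟨hx, fun i => ?_⟩
    rw [Real.norm_eq_abs, abs_div]
    exact div_le_one_of_le₀ (hy i) (abs_nonneg x)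
  rw [y_eq, clearedFactor_eq, abs_mul, abs_of_nonneg (sq_nonneg x), mul_comm]
  exact mul_le_mul_of_nonneg_right (hC _ mem_ball) (sq_nonneg x)

theorem innerTerm_eq (q n : ℕ) (s : ℝ) (d : ℕ) :
    innerTerm q n s d =
      (1 - 2 * (q : ℝ)⁻¹ ^ n + 2 * ((q : ℝ)⁻¹ ^ n) ^ 3 - ((q : ℝ)⁻¹ ^ n) ^ 4) *
        ((s * (q : ℝ)⁻¹) ^ n * ((s * (q : ℝ)⁻¹) ^ n) ^ d) := by
  unfold innerTerm
  ring

theorem hasSum_innerTerm {q n : ℕ} {s : ℝ} (hs : |(s * (q : ℝ)⁻¹) ^ n| < 1) :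
    HasSum (innerTerm q n s)
      ((1 - 2 * (q : ℝ)⁻¹ ^ n + 2 * ((q : ℝ)⁻¹ ^ n) ^ 3 - ((q : ℝ)⁻¹ ^ n) ^ 4) *
        ((s * (q : ℝ)⁻¹) ^ n * (1 - (s * (q : ℝ)⁻¹) ^ n)⁻¹)) := by
  rw [funext (innerTerm_eq q n s)]
  exact ((hasSum_geometric_of_abs_lt_one hs).mul_left _).mul_left _

theorem eulerFactor_mul_prod {q n : ℕ} {t : Fin 4 → ℝ}
    (ht : ∀ i, |(t i * (q : ℝ)⁻¹) ^ n| < 1) :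
    eulerFactor q n t * ∏ i, (1 - (t i * (q : ℝ)⁻¹) ^ n) = regularizedFactor q n t := by
  have hne (i) : 1 - (t i * (q : ℝ)⁻¹) ^ n ≠ 0 := (sub_pos.2 (abs_lt.1 (ht i)).2).ne'
  have cancel (i) : (1 - (t i * (q : ℝ)⁻¹) ^ n)⁻¹ * ∏ j, (1 - (t j * (q : ℝ)⁻¹) ^ n) =
      ∏ j, (1 - (t (i.succAbove j) * (q : ℝ)⁻¹) ^ n) := by
    rw [Fin.prod_univ_succAbove _ i, inv_mul_cancel_left₀ (hne i)]
  simp only [eulerFactor, regularizedFactor, clearedFactor, (hasSum_innerTerm (ht _)).tsum_eq,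
    ← Finset.mul_sum, add_mul, mul_assoc, Finset.sum_mul, cancel, mul_comm _ n, pow_mul]

theorem abs_mul_inv_pow_le {s : ℝ} (hs : |s| ≤ 1) (q n : ℕ) :
    |(s * (q : ℝ)⁻¹) ^ n| ≤ |(q : ℝ)⁻¹ ^ n| := by
  rw [abs_pow, abs_pow, abs_mul]
  exact pow_le_pow_left₀ (by positivity) (mul_le_of_le_one_left (abs_nonneg _) hs) n

theorem abs_mul_inv_lt_one {s : ℝ} (hs : |s| < 1) (q : ℕ) : |s * (q : ℝ)⁻¹| < 1 := by
  rw [abs_mul, abs_inv, Nat.abs_cast]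
  exact mul_lt_one_of_nonneg_of_lt_one_left (abs_nonneg s) hs (Nat.cast_inv_le_one q)

theorem abs_mul_inv_pow_lt_one {s : ℝ} (hs : |s| < 1) (q : ℕ) {n : ℕ} (hn : n ≠ 0) :
    |(s * (q : ℝ)⁻¹) ^ n| < 1 := by
  rw [abs_pow]
  exact pow_lt_one₀ (abs_nonneg _) (abs_mul_inv_lt_one hs q) hn

end EulerFactor

section HeightZeta

variable (F : Type*) [Field F] [Finite F]

theorem exists_numClosedPoints_mul_norm_regularizedFactor_sub_one_le :
    ∃ C, ∀ t : Fin 4 → ℝ, (∀ i, |t i| ≤ 1) → ∀ n ≠ 0,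
      numClosedPoints F n * ‖regularizedFactor (Nat.card F) n t - 1‖ ≤
        C * (Nat.card F : ℝ)⁻¹ ^ n := by
  obtain ⟨C, hC⟩ := exists_abs_clearedFactor_sub_one_le
  refine ⟨2 * C, fun t ht n hn => ?_⟩
  have card_ne_zero : (Nat.card F : ℝ) ≠ 0 := by exact_mod_cast Nat.card_pos.ne'
  have inv_pow_le_one : |(Nat.card F : ℝ)⁻¹ ^ n| ≤ 1 := by
    rw [abs_of_nonneg (by positivity)]
    exact pow_le_one₀ (by positivity) (Nat.cast_inv_le_one _)
  calc (numClosedPoints F n : ℝ) * ‖regularizedFactor (Nat.card F) n t - 1‖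
    _ ≤ (2 * (Nat.card F : ℝ) ^ n) * (C * ((Nat.card F : ℝ)⁻¹ ^ n) ^ 2) :=
      mul_le_mul (by exact_mod_cast numClosedPoints_le F hn)
        (hC _ _ inv_pow_le_one fun i => abs_mul_inv_pow_le (ht i) _ n) (norm_nonneg _)
        (by positivity)
    _ = 2 * C * (Nat.card F : ℝ)⁻¹ ^ n := by
      rw [inv_pow]
      field_simp

theorem summable_inv_natCard_pow_succ : Summable fun n : ℕ => (Nat.card F : ℝ)⁻¹ ^ (n + 1) := by
  have card_gt_one : (1 : ℝ) < Nat.card F := by exact_mod_cast Finite.one_lt_card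
  exact (summable_nat_add_iff 1).2
    (summable_geometric_of_lt_one (by positivity) (inv_lt_one_of_one_lt₀ card_gt_one))

theorem multipliable_regularizedFactor {t : Fin 4 → ℝ} (ht : ∀ i, |t i| ≤ 1) :
    Multipliable fun n : ℕ =>
      regularizedFactor (Nat.card F) (n + 1) t ^ numClosedPoints F (n + 1) := by
  obtain ⟨C, hC⟩ := exists_numClosedPoints_mul_norm_regularizedFactor_sub_one_le F
  exact multipliable_pow_of_summable <|
    ((summable_inv_natCard_pow_succ F).mul_left C).of_nonneg_of_le
      (fun _ => by positivity) fun n => hC t ht (n + 1) n.succ_ne_zero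

theorem multipliable_tamagawaFactor :
    Multipliable fun n : ℕ => tamagawaFactor (Nat.card F) (n + 1) ^ numClosedPoints F (n + 1) := by
  simpa only [regularizedFactor_one] using
    multipliable_regularizedFactor F (t := fun _ => 1) fun _ => abs_one.le

theorem tendsto_tprod_regularizedFactor :
    Tendsto
      (fun t => ∏' n : ℕ, regularizedFactor (Nat.card F) (n + 1) t ^ numClosedPoints F (n + 1))
      (𝓝[{t | ∀ i, |t i| ≤ 1}] fun _ => 1)
      (𝓝 (∏' n : ℕ, tamagawaFactor (Nat.card F) (n + 1) ^ numClosedPoints F (n + 1))) := by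
  obtain ⟨C, hC⟩ := exists_numClosedPoints_mul_norm_regularizedFactor_sub_one_le F
  refine tendsto_tprod_pow_of_dominated_convergence ((summable_inv_natCard_pow_succ F).mul_left C)
    (fun n => ?_) ?_
  · rw [← regularizedFactor_one]
    exact (continuous_regularizedFactor _ _).continuousWithinAt
  · filter_upwards [self_mem_nhdsWithin] with t ht n
    exact hC t ht (n + 1) n.succ_ne_zero

theorem hasProd_prod_one_sub_pow_numClosedPoints {t : Fin 4 → ℝ} (ht : ∀ i, |t i| < 1) :
    HasProd
      (fun n : ℕ =>
        (∏ i, (1 - (t i * (Nat.card F : ℝ)⁻¹) ^ (n + 1))) ^ numClosedPoints F (n + 1))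
      (∏ i, ((1 - t i) * (1 - t i * (Nat.card F : ℝ)⁻¹))) := by
  simp only [← Finset.prod_pow]
  refine hasProd_prod fun i _ => ?_
  have card_mul : (Nat.card F : ℝ) * (t i * (Nat.card F : ℝ)⁻¹) = t i := by
    have card_ne_zero : (Nat.card F : ℝ) ≠ 0 := by exact_mod_cast Nat.card_pos.ne'
    field_simp
  have h := hasProd_one_sub_pow_pow_numClosedPoints F (u := t i * (Nat.card F : ℝ)⁻¹)
  rw [card_mul] at h
  exact h (ht i)

theorem hasProd_eulerFactor {t : Fin 4 → ℝ} (ht : ∀ i, |t i| < 1) :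
    HasProd (fun n : ℕ => eulerFactor (Nat.card F) (n + 1) t ^ numClosedPoints F (n + 1))
      ((∏' n : ℕ, regularizedFactor (Nat.card F) (n + 1) t ^ numClosedPoints F (n + 1)) /
        ∏ i, ((1 - t i) * (1 - t i * (Nat.card F : ℝ)⁻¹))) := by
  have one_sub_ne_zero {u : ℝ} (hu : |u| < 1) : 1 - u ≠ 0 := (sub_pos.2 (abs_lt.1 hu).2).ne'
  have pow_lt_one (n i) := abs_mul_inv_pow_lt_one (ht i) (Nat.card F) (Nat.succ_ne_zero n)
  refine ((multipliable_regularizedFactor F fun i => (ht i).le).hasProd.div₀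
    (hasProd_prod_one_sub_pow_numClosedPoints F ht) ?_).congr_fun fun n => ?_
  · exact Finset.prod_ne_zero_iff.2 fun i _ =>
      mul_ne_zero (one_sub_ne_zero (ht i)) (one_sub_ne_zero (abs_mul_inv_lt_one (ht i) _))
  · rw [← eulerFactor_mul_prod (pow_lt_one n), ← div_pow, mul_div_cancel_right₀]
    exact Finset.prod_ne_zero_iff.2 fun i _ => one_sub_ne_zero (pow_lt_one n i)

theorem prod_one_sub_mul_tprod_eulerFactor {t : Fin 4 → ℝ} (ht : ∀ i, |t i| < 1) :
    (∏ i, (1 - t i)) *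
        ∏' n : ℕ, eulerFactor (Nat.card F) (n + 1) t ^ numClosedPoints F (n + 1) =
      (∏ i, (1 - t i * (Nat.card F : ℝ)⁻¹))⁻¹ *
        ∏' n : ℕ, regularizedFactor (Nat.card F) (n + 1) t ^ numClosedPoints F (n + 1) := by
  have prod_ne_zero : ∏ i, (1 - t i) ≠ 0 :=
    Finset.prod_ne_zero_iff.2 fun i _ => (sub_pos.2 (abs_lt.1 (ht i)).2).ne'
  rw [(hasProd_eulerFactor F ht).tprod_eq, Finset.prod_mul_distrib]
  field_simp

theorem tendsto_prod_one_sub_mul_tprod_eulerFactor :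
    Tendsto
      (fun t : Fin 4 → ℝ => (∏ i, (1 - t i)) *
        ∏' n : ℕ, eulerFactor (Nat.card F) (n + 1) t ^ numClosedPoints F (n + 1))
      (𝓝[{t | ∀ i, |t i| < 1}] fun _ => 1)
      (𝓝 ((1 - (Nat.card F : ℝ)⁻¹)⁻¹ ^ 4 *
        ∏' n : ℕ, tamagawaFactor (Nat.card F) (n + 1) ^ numClosedPoints F (n + 1))) := by
  have card_gt_one : (1 : ℝ) < Nat.card F := by exact_mod_cast Finite.one_lt_card
  have tendsto_prod : Tendsto (fun t : Fin 4 → ℝ => ∏ i, (1 - t i * (Nat.card F : ℝ)⁻¹))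
      (𝓝 fun _ => 1) (𝓝 ((1 - (Nat.card F : ℝ)⁻¹) ^ 4)) :=
    Continuous.tendsto' (by fun_prop) _ _ (by simp)
  have ne_zero : (1 - (Nat.card F : ℝ)⁻¹) ^ 4 ≠ 0 :=
    pow_ne_zero _ (sub_pos.2 (inv_lt_one_of_one_lt₀ card_gt_one)).ne'
  have tendsto_tprod := (tendsto_tprod_regularizedFactor F).mono_left
    (nhdsWithin_mono _ fun t (ht : ∀ i, |t i| < 1) i => (ht i).le)
  rw [inv_pow]
  refine (((tendsto_prod.inv₀ ne_zero).mono_left nhdsWithin_le_nhds).mul tendsto_tprod).congr' ?_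
  filter_upwards [self_mem_nhdsWithin] with t ht
  exact (prod_one_sub_mul_tprod_eulerFactor F ht).symm

end HeightZeta

theorem virtual_height_zeta_limit_general (F : Type*) [Field F] [Finite F]
    (q : ℕ) (hq : q = Nat.card F) :
    (∀ n : ℕ, 1 ≤ n → ∀ t : Fin 4 → ℝ, (∀ i, |t i| < 1) → ∀ i : Fin 4,
      Summable fun d : ℕ => |innerTerm q n (t i) d|) ∧
    (∀ t : Fin 4 → ℝ, (∀ i, |t i| < 1) →
      Multipliable fun n : ℕ => eulerFactor q (n + 1) t ^ numClosedPoints F (n + 1)) ∧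
    (Multipliable fun n : ℕ => tamagawaFactor q (n + 1) ^ numClosedPoints F (n + 1)) ∧
    Tendsto
      (fun t : Fin 4 → ℝ =>
        (∏ i, (1 - t i)) * ∏' n : ℕ, eulerFactor q (n + 1) t ^ numClosedPoints F (n + 1))
      (𝓝[{t : Fin 4 → ℝ | ∀ i, |t i| < 1}] fun _ => 1)
      (𝓝 ((1 - (q : ℝ)⁻¹)⁻¹ ^ 4 *
        ∏' n : ℕ, tamagawaFactor q (n + 1) ^ numClosedPoints F (n + 1))) := by
  subst hq
  refine ⟨fun n hn t ht i => ?_, fun t ht => (hasProd_eulerFactor F ht).multipliable,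
    multipliable_tamagawaFactor F, tendsto_prod_one_sub_mul_tprod_eulerFactor F⟩
  have pow_lt_one := abs_mul_inv_pow_lt_one (ht i) (Nat.card F) (Nat.one_le_iff_ne_zero.1 hn)
  exact (hasSum_innerTerm pow_lt_one).summable.abs

/-- Over a finite field with `q` elements: the inner series of each Euler
factor converges absolutely; (a) the virtual height zeta function
`Z(t) = ∏_{n≥1} P_n(t)^{a_n}` converges for `t ∈ [0,1)⁴`; (b) the Euler product
`C = ∏_{n≥1} ((1−q^{−n})⁶(1+6q^{−n}+q^{−2n}))^{a_n}` converges; and (c)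
`(1−t₁)(1−t₂)(1−t₃)(1−t₄)·Z(t) → (1−q^{−1})^{−4}·C` as `t → (1,1,1,1)` within `[0,1)⁴`. -/
theorem virtual_height_zeta_limit (F : Type*) [Field F] [Fintype F]
    (q : ℕ) (hq : q = Fintype.card F) :
    (∀ n : ℕ, 1 ≤ n → ∀ t : Fin 4 → ℝ, (∀ i, t i ∈ Set.Ico (0 : ℝ) 1) → ∀ i : Fin 4,
      Summable fun d : ℕ => |innerTerm q n (t i) d|) ∧
    (∀ t : Fin 4 → ℝ, (∀ i, t i ∈ Set.Ico (0 : ℝ) 1) →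
      Multipliable fun n : ℕ => eulerFactor q (n + 1) t ^ numClosedPoints F (n + 1)) ∧
    (Multipliable fun n : ℕ => tamagawaFactor q (n + 1) ^ numClosedPoints F (n + 1)) ∧
    Tendsto
      (fun t : Fin 4 → ℝ =>
        (∏ i, (1 - t i)) * ∏' n : ℕ, eulerFactor q (n + 1) t ^ numClosedPoints F (n + 1))
      (nhdsWithin (fun _ => 1) {t : Fin 4 → ℝ | ∀ i, t i ∈ Set.Ico (0 : ℝ) 1})
      (nhds (((1 - (q : ℝ)⁻¹)⁻¹) ^ 4 *
        ∏' n : ℕ, tamagawaFactor q (n + 1) ^ numClosedPoints F (n + 1))) := by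
  have abs_lt_one (t : Fin 4 → ℝ) (ht : ∀ i, t i ∈ Set.Ico (0 : ℝ) 1) (i) : |t i| < 1 :=
    abs_lt.2 ⟨neg_one_lt_zero.trans_le (ht i).1, (ht i).2⟩
  obtain ⟨summable, multipliable, multipliable_tamagawa, tendsto⟩ :=
    virtual_height_zeta_limit_general F q (hq.trans Nat.card_eq_fintype_card.symm)
  exact ⟨fun n hn t ht => summable n hn t (abs_lt_one t ht),
    fun t ht => multipliable t (abs_lt_one t ht), multipliable_tamagawa,
    tendsto.mono_left (nhdsWithin_mono _ abs_lt_one)⟩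
end
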